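/- With C_φ defined by C_φ(φ_R(T)) = φ_R(C_{m+1|n}(T)) (applying φ_R coefficientwise), one has C_φ(T+R) = (E − T)·C_{m|n}(T+1), and consequently C_φ(E + R) = 0. -/

import Mathlib

set_option maxHeartbeats 1000000
set_option synthInstance.maxHeartbeats 400000

noncomputable section
open scoped TensorProduct

/-- The index set `I = {1,…,m,1̄,…,n̄}` of `gl(m|n)`; `Sum.inl` are the even
(unbarred) indices, `Sum.inr` the odd (barred) ones.  The index set
`Î = {0} ∪ I` of `gl(m+1|n)` is realized as `Ind (m+1) n`, with `0 = Sum.inl 0`. -/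
abbrev Ind (m n : ℕ) := Fin m ⊕ Fin n

/-- Parity of an index, as `0` or `1`. -/
def pI {m n : ℕ} : Ind m n → ℕ := Sum.elim (fun _ => 0) (fun _ => 1)

/-- The total order `1 < ⋯ < m < 1̄ < ⋯ < n̄` on `I` (and, with `m+1` in place of `m`,
the order `0 < 1 < ⋯ < m < 1̄ < ⋯ < n̄` on `Î`). -/
def iltI {m n : ℕ} : Ind m n → Ind m n → Prop
  | Sum.inl a, Sum.inl b => a < b
  | Sum.inl _, Sum.inr _ => True
  | Sum.inr _, Sum.inl _ => False
  | Sum.inr a, Sum.inr b => a < b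

/-- The distinguished index `0` of `Î`. -/
def z0 {m n : ℕ} : Ind (m+1) n := Sum.inl 0

/-- The inclusion `I ↪ Î`. -/
def emb {m n : ℕ} : Ind m n → Ind (m+1) n := Sum.map Fin.succ id

lemma emb_injective {m n : ℕ} : Function.Injective (emb (m := m) (n := n)) := by
  intro a b h
  cases a <;> cases b <;> simp [emb, Fin.succ_inj] at h <;> simp [h]

lemma emb_ne_z0 {m n : ℕ} (a : Ind m n) : emb a ≠ z0 := by
  cases a <;> simp [emb, z0, Fin.succ_ne_zero]

/-- Builds a linear map out of a space with basis `α` from a function on basis vectors. -/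
def mkOp {α M : Type} [AddCommGroup M] [Module ℂ M] (g : α → M) : (α →₀ ℂ) →ₗ[ℂ] M :=
  Finsupp.lsum ℂ fun x => LinearMap.toSpanSingleton ℂ M (g x)

/-- Number of odd variables occurring before position `i`. -/
def cntB {n : ℕ} (b : Fin n → Bool) (i : Fin n) : ℕ :=
  (Finset.univ.filter fun j => j < i ∧ b j = true).card

/-- Number of odd variables occurring. -/
def cntA {n : ℕ} (b : Fin n → Bool) : ℕ := (Finset.univ.filter fun j => b j = true).card


/-- The defining (super-)commutation relations of `gl`:
`e_ij e_kl − (−1)^{(|i|+|j|)(|k|+|l|)} e_kl e_ij = δ_jk e_il − (−1)^{(|i|+|j|)(|k|+|l|)} δ_li e_kj`. -/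
inductive glRel (ι : Type) (p : ι → ℕ) [DecidableEq ι] :
    FreeAlgebra ℂ (ι × ι) → FreeAlgebra ℂ (ι × ι) → Prop
  | basic (i j k l : ι) : glRel ι p
      (FreeAlgebra.ι ℂ (i, j) * FreeAlgebra.ι ℂ (k, l)
        - ((-1 : ℂ) ^ ((p i + p j) * (p k + p l))) •
            (FreeAlgebra.ι ℂ (k, l) * FreeAlgebra.ι ℂ (i, j)))
      ((if j = k then FreeAlgebra.ι ℂ (i, l) else 0)
        - ((-1 : ℂ) ^ ((p i + p j) * (p k + p l))) •
            (if l = i then FreeAlgebra.ι ℂ (k, j) else 0))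

/-- The universal enveloping superalgebra of the general linear Lie superalgebra with
index set `ι` and parity `p`, presented by generators `e_ij` and the super-commutator
relations. -/
abbrev UEA (ι : Type) (p : ι → ℕ) [DecidableEq ι] : Type := RingQuot (glRel ι p)

/-- The generator `e_ij` of `UEA ι p`. -/
def gen {ι : Type} (p : ι → ℕ) [DecidableEq ι] (i j : ι) : UEA ι p :=
  RingQuot.mkAlgHom ℂ (glRel ι p) (FreeAlgebra.ι ℂ (i, j))

/-- Monomials `t_0^{k} t^e t̄^b` of `F = ℂ[t_0^{±1},t_1,…,t_m] ⊗ Λ_n`. -/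
abbrev FMon (m n : ℕ) := ℤ × (Fin m → ℕ) × (Fin n → Bool)

/-- `F = ℂ[t_0^{±1},t_1,…,t_m] ⊗ Λ_n` as the vector space with basis the monomials. -/
abbrev FSp (m n : ℕ) : Type := FMon m n →₀ ℂ

/-- The basis monomial of `F` attached to `x`. -/
def fmono {m n : ℕ} (x : FMon m n) : FSp m n := Finsupp.single x 1

/-- Left multiplication by `t_i/t_0` for an even index `i ∈ {1,…,m}`. -/
def opDivE {m n : ℕ} (i : Fin m) : Module.End ℂ (FSp m n) :=
  mkOp fun x => fmono (x.1 - 1, Function.update x.2.1 i (x.2.1 i + 1), x.2.2)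

/-- Left multiplication by `t_ī/t_0` for an odd index `ī`. -/
def opDivO {m n : ℕ} (i : Fin n) : Module.End ℂ (FSp m n) :=
  mkOp fun x => if x.2.2 i then 0 else
    ((-1 : ℂ) ^ (cntB x.2.2 i)) • fmono (x.1 - 1, x.2.1, Function.update x.2.2 i true)

/-- The operator `t_0 ∂_0`. -/
def opPar0 {m n : ℕ} : Module.End ℂ (FSp m n) :=
  mkOp fun x => (x.1 : ℂ) • fmono x

/-- The operator `t_0 ∂_i` for an even index `i ∈ {1,…,m}`. -/
def opParE {m n : ℕ} (i : Fin m) : Module.End ℂ (FSp m n) :=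
  mkOp fun x => (x.2.1 i : ℂ) • fmono (x.1 + 1, Function.update x.2.1 i (x.2.1 i - 1), x.2.2)

/-- The operator `t_0 ∂_ī` for an odd index `ī`. -/
def opParO {m n : ℕ} (i : Fin n) : Module.End ℂ (FSp m n) :=
  mkOp fun x => if x.2.2 i then
    ((-1 : ℂ) ^ (cntB x.2.2 i)) • fmono (x.1 + 1, x.2.1, Function.update x.2.2 i false) else 0

/-- The multiplication operators `t_i/t_0`, `i ∈ I`. -/
def opDiv {m n : ℕ} : Ind m n → Module.End ℂ (FSp m n) := Sum.elim opDivE opDivO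

/-- The operators `t_0 ∂_i`, `i ∈ Î`. -/
def opPar {m n : ℕ} : Ind (m+1) n → Module.End ℂ (FSp m n) :=
  Sum.elim (Fin.cases opPar0 opParE) opParO

/-- The multiplication operators `t_i/t_0` for `i ∈ Î` (equal to `1` for `i = 0`). -/
def opDivB {m n : ℕ} : Ind (m+1) n → Module.End ℂ (FSp m n) :=
  Sum.elim (Fin.cases 1 opDivE) opDivO

/-- The generators of `D'(m|n)`. -/
def Dgens (m n : ℕ) : Set (Module.End ℂ (FSp m n)) := Set.range opDiv ∪ Set.range opPar

/-- The superalgebra `D'(m|n)` of differential operators on `F`, i.e. the subalgebra of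
operators on `F` generated by `t_i/t_0` (`i ∈ I`) and `t_0∂_i` (`i ∈ Î`). -/
def Dprime (m n : ℕ) : Subalgebra ℂ (Module.End ℂ (FSp m n)) := Algebra.adjoin ℂ (Dgens m n)

/-- `t_i/t_0` as an element of `D'(m|n)`. -/
def tdiv {m n : ℕ} (i : Ind m n) : Dprime m n :=
  ⟨opDiv i, Algebra.subset_adjoin (Or.inl ⟨i, rfl⟩)⟩

/-- `t_0∂_i` as an element of `D'(m|n)`. -/
def tpar {m n : ℕ} (i : Ind (m+1) n) : Dprime m n :=
  ⟨opPar i, Algebra.subset_adjoin (Or.inr ⟨i, rfl⟩)⟩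

/-- `t_i/t_0` for `i ∈ Î` as an element of `D'(m|n)`. -/
def tdivB {m n : ℕ} : Ind (m+1) n → Dprime m n :=
  Sum.elim (Fin.cases 1 fun i => tdiv (Sum.inl i)) fun i => tdiv (Sum.inr i)

/-- The operator `t_a∂_b = (t_a/t_0)(t_0∂_b)` of `D'(m|n)`, for `a, b ∈ Î`. -/
def tdel {m n : ℕ} (a b : Ind (m+1) n) : Dprime m n := tdivB a * tpar b

/-- The Euler operator `E = Σ_{i∈Î} t_i∂_i ∈ D'(m|n)`. -/
def En (m n : ℕ) : Dprime m n := ∑ i : Ind (m+1) n, tdel i i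

noncomputable instance instDprimeRing (m n : ℕ) : Ring (Dprime m n) :=
  @Subalgebra.toRing ℂ (Module.End ℂ (FSp m n)) inferInstance inferInstance inferInstance _

noncomputable instance instDprimeAlgebra (m n : ℕ) : Algebra ℂ (Dprime m n) :=
  @Subalgebra.algebra ℂ (Module.End ℂ (FSp m n)) inferInstance inferInstance inferInstance _

/-- The super tensor product `D'(m|n) ⊗ U(gl(m|n))`, axiomatized: an algebra `T` together
with algebra maps `d ↦ d⊗1`, `u ↦ 1⊗u`, such that the induced linear map
`D'(m|n) ⊗_ℂ U(gl(m|n)) → T` is a linear isomorphism and such that the Koszul sign rule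
`(1⊗u)(d⊗1) = (−1)^{|u||d|}(d⊗1)(1⊗u)` holds on (super-)generators. -/
structure SuperTensor (m n : ℕ) where
  T : Type
  [ringT : Ring T]
  [algT : Algebra ℂ T]
  inD : Dprime m n →ₐ[ℂ] T
  inU : UEA (Ind m n) pI →ₐ[ℂ] T
  equiv : ((Dprime m n) ⊗[ℂ] (UEA (Ind m n) pI)) ≃ₗ[ℂ] T
  equiv_tmul : ∀ (d : Dprime m n) (u : UEA (Ind m n) pI), equiv (d ⊗ₜ u) = inD d * inU u
  comm_div : ∀ (i j k : Ind m n),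
    inU (gen pI i j) * inD (tdiv k) =
      ((-1 : ℂ) ^ ((pI i + pI j) * pI k)) • (inD (tdiv k) * inU (gen pI i j))
  comm_par : ∀ (i j : Ind m n) (k : Ind (m+1) n),
    inU (gen pI i j) * inD (tpar k) =
      ((-1 : ℂ) ^ ((pI i + pI j) * pI k)) • (inD (tpar k) * inU (gen pI i j))

attribute [instance] SuperTensor.ringT SuperTensor.algT

/-- The predicate expressing that `φ : U(gl(m+1|n)) → D'(m|n) ⊗ U(gl(m|n))` is given on the
generators `e_ab` by the formulas of Theorem 3.1 (for the central element `R`). -/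
def IsPhi {m n : ℕ} (ST : SuperTensor m n) (R : ST.T)
    (φ : UEA (Ind (m+1) n) pI →ₐ[ℂ] ST.T) : Prop :=
  (∀ a b : Ind m n, φ (gen pI (emb a) (emb b)) =
      ST.inD (tdel (emb a) (emb b)) + ST.inU (gen pI a b)
        + (if a = b then ((-1 : ℂ) ^ (pI a * pI b)) • R else 0)) ∧
  (∀ a : Ind m n, φ (gen pI (emb a) z0) =
      ST.inD (tdel (emb a) z0)
        - ∑ j : Ind m n, ((-1 : ℂ) ^ (pI a * pI j)) • (ST.inD (tdiv j) * ST.inU (gen pI a j))) ∧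
  (∀ b : Ind m n, φ (gen pI z0 (emb b)) = ST.inD (tdel z0 (emb b))) ∧
  (φ (gen pI z0 z0) = ST.inD (tdel z0 z0) + R)

/-- The generating set of `U(sl(m+1|n))` inside `U(gl(m+1|n))`: the `e_ij` with `i ≠ j`
together with `e_00 − (−1)^{|a|} e_aa` for `a ∈ I`. -/
def slSet (m n : ℕ) : Set (UEA (Ind (m+1) n) pI) :=
  {x | (∃ i j : Ind (m+1) n, i ≠ j ∧ x = gen pI i j) ∨
    (∃ a : Ind m n, x = gen pI z0 z0 - ((-1 : ℂ) ^ (pI a)) • gen pI (emb a) (emb a))}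

/-- `U(sl(m+1|n))`, realized as the subalgebra of `U(gl(m+1|n))` generated by `sl(m+1|n)`. -/
def Usl (m n : ℕ) : Subalgebra ℂ (UEA (Ind (m+1) n) pI) := Algebra.adjoin ℂ (slSet m n)

lemma mem_gen_ne {m n : ℕ} {i j : Ind (m+1) n} (h : i ≠ j) : gen pI i j ∈ Usl m n :=
  Algebra.subset_adjoin (Or.inl ⟨i, j, h, rfl⟩)

lemma mem_h {m n : ℕ} (a : Ind m n) :
    gen pI z0 z0 - ((-1 : ℂ) ^ (pI a)) • gen pI (emb a) (emb a) ∈ Usl m n :=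
  Algebra.subset_adjoin (Or.inr ⟨a, rfl⟩)

/-- The predicate expressing that `ψ : U(sl(m+1|n)) → D'(m|n) ⊗ U(gl(m|n))` is given on the
generators by the formulas of Corollary 3.2 (the homomorphism `φ^s`). -/
def IsPhiS {m n : ℕ} (ST : SuperTensor m n) (ψ : Usl m n →ₐ[ℂ] ST.T) : Prop :=
  (∀ (a b : Ind m n) (h : a ≠ b),
    ψ ⟨gen pI (emb a) (emb b), mem_gen_ne fun he => h (emb_injective he)⟩ =
      ST.inD (tdel (emb a) (emb b)) + ST.inU (gen pI a b)) ∧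
  (∀ a : Ind m n, ψ ⟨gen pI (emb a) z0, mem_gen_ne (emb_ne_z0 a)⟩ =
      ST.inD (tdel (emb a) z0)
        - ∑ j : Ind m n, ((-1 : ℂ) ^ (pI a * pI j)) • (ST.inD (tdiv j) * ST.inU (gen pI a j))) ∧
  (∀ b : Ind m n, ψ ⟨gen pI z0 (emb b), mem_gen_ne (Ne.symm (emb_ne_z0 b))⟩ =
      ST.inD (tdel z0 (emb b))) ∧
  (∀ a : Ind m n, ψ ⟨gen pI z0 z0 - ((-1 : ℂ) ^ (pI a)) • gen pI (emb a) (emb a), mem_h a⟩ =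
      ST.inD (tdel (m:=m) (n:=n) z0 z0 - ((-1 : ℂ) ^ (pI a)) • tdel (emb a) (emb a))
        - ((-1 : ℂ) ^ (pI a)) • ST.inU (gen pI a a))

/-- The first Gelfand invariant `G₁ = Σ_i e_ii`. -/
def G1 (ι : Type) (p : ι → ℕ) [DecidableEq ι] [Fintype ι] : UEA ι p := ∑ i : ι, gen p i i

/-- The distinguished central element `R₁ = −(1/(m−n+1))(E⊗1 + 1⊗G₁)`. -/
def R1elt {m n : ℕ} (ST : SuperTensor m n) : ST.T :=
  -(1 / ((m : ℂ) - n + 1)) • (ST.inD (En m n) + ST.inU (G1 (Ind m n) pI))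

/-- The algebra of Laurent-type series in `T` with coefficients in `A`: Hahn series over `ℤ`,
where the exponent `k` records the power `T^{-k}` (so that supports of honest Laurent series
in `T^{-1}`, with finitely many positive powers of `T`, are well-ordered). -/
abbrev TSer (A : Type) [Ring A] := HahnSeries ℤ A

/-- The variable `T`. -/
def Tv {A : Type} [Ring A] : TSer A := HahnSeries.single (-1 : ℤ) (1 : A)

/-- The matrix `𝔈 = ((−1)^{|i|} e_{ij})_{i,j∈I}` with entries in `A`, as a matrix of constant
series. -/
def scrE (m n : ℕ) {A : Type} [Ring A] [Algebra ℂ A] (e : Ind m n → Ind m n → A) :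
    Matrix (Ind m n) (Ind m n) (TSer A) :=
  fun i j => HahnSeries.C (((-1 : ℂ) ^ (pI i)) • e i j)

/-- The Capelli Berezinian
`C_{m|n}(v) = Det[(𝔈−v−i+1)_{ij}]_{i,j≤m} ⬝ Det[((𝔈−v−m+i)^{−1})^{st}_{ij}]_{m<i,j≤m+n}`
of the matrix `E`, evaluated at the series `v`.  Here `Det` denotes the column determinant
`Σ_σ sgn(σ) X_{σ(1),1}⋯X_{σ(N),N}`, matrix inverses are taken in the matrix ring over the
Laurent series algebra (via `Ring.inverse`), and the supertransposition signs
`(−1)^{|i|(|j|+1)}` are equal to `1` on the odd-odd block. -/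
def capelli {m n : ℕ} {A : Type} [Ring A] [Algebra ℂ A]
    (E : Matrix (Ind m n) (Ind m n) (TSer A)) (v : TSer A) : TSer A :=
  (∑ σ : Equiv.Perm (Fin m), ((Equiv.Perm.sign σ : ℤˣ) : ℤ) •
      (List.ofFn fun t : Fin m =>
        E (Sum.inl (σ t)) (Sum.inl t)
          - (if σ t = t then v + (((t : ℕ) : ℂ) • 1) else 0)).prod)
  * (∑ τ : Equiv.Perm (Fin n), ((Equiv.Perm.sign τ : ℤˣ) : ℤ) •
      (List.ofFn fun t : Fin n =>
        (Ring.inverse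
          (E - (v + ((((m : ℂ) - ((t : ℕ) : ℂ)) - 1) • 1)) •
            (1 : Matrix (Ind m n) (Ind m n) (TSer A))))
          (Sum.inr t) (Sum.inr (τ t))).prod)

set_option maxHeartbeats 1000000

/-- left-to-right product -/
def lpr {Ω : Type} [Monoid Ω] (f : ℕ → Ω) : ℕ → Ω
  | 0 => 1
  | k+1 => lpr f k * f k

def rp {Ω : Type} [Monoid Ω] (f : ℕ → Ω) : ℕ → ℕ → Ω
  | _, 0 => 1
  | k, j+1 => f k * rp f (k+1) j

lemma lpr_rp {Ω : Type} [Monoid Ω] (f : ℕ → Ω) (k j : ℕ) : lpr f k * rp f k j = lpr f (k+j) := by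
  induction j generalizing k with
  | zero => simp [rp]
  | succ j ih =>
    rw [rp, ← mul_assoc]
    have := ih (k+1)
    rw [lpr] at this
    rw [this]; congr 1; omega

lemma lpr_congr {Ω : Type} [Monoid Ω] {f g : ℕ → Ω} {k : ℕ} (h : ∀ t < k, f t = g t) :
    lpr f k = lpr g k := by
  induction k with
  | zero => rfl
  | succ k ih => rw [lpr, lpr, ih (fun t ht => h t (by omega)), h k (by omega)]

lemma ofFn_prod_lpr {Ω : Type} [Monoid Ω] {k : ℕ} (f : Fin k → Ω) (g : ℕ → Ω)
    (h : ∀ t : Fin k, f t = g t) : (List.ofFn f).prod = lpr g k := by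
  induction k with
  | zero => simp [lpr]
  | succ k ih =>
    rw [List.ofFn_succ', List.concat_eq_append, List.prod_append, lpr, ih _ (fun t => by rw [h]; rfl)]
    simp [h]

lemma lpr_commute {Ω : Type} [Monoid Ω] {f : ℕ → Ω} {x : Ω} {k : ℕ} (h : ∀ t < k, Commute x (f t)) :
    Commute x (lpr f k) := by
  induction k with
  | zero => exact Commute.one_right x
  | succ k ih => exact (ih (fun t ht => h t (by omega))).mul_right (h k (by omega))

section odd
variable {Ω : Type} [Ring Ω]

theorem oddO (n : ℕ) (γ0 δ c0 : Ω) (γ y : ℕ → Ω) (θ : ℕ → ℕ → Ω) (η ci : ℕ → Ω)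
    (hc : ∀ x, Commute c0 x) (hci : ∀ t < n, (c0 + (t : Ω)) * ci t = 1)
    (hyy : ∀ a b, y a * y b = -(y b * y a)) (hy2 : ∀ a, y a * y a = 0)
    (hθθ : ∀ t a b, t + 1 < n → θ t a * θ (t+1) b = -(θ t b * θ (t+1) a))
    (hθθ0 : ∀ t a, t + 1 < n → θ t a * θ (t+1) a = 0)
    (hθη : ∀ t a, t + 1 < n → θ t a * η (t+1) = -(η t * θ (t+1) a))
    (hηy : ∀ t a, t < n → η t * y a = -(y a * η t) + θ t a)
    (hθy : ∀ t a b, t < n → θ t a * y b = y b * θ t a)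
    (h1 : γ0 + ∑ b ∈ Finset.range n, γ b * y b = δ * c0)
    (h2 : 0 < n → δ * η 0 = - ∑ b ∈ Finset.range n, γ b * θ 0 b)
    (h3 : ∀ a < n, ∀ b, γ b * y a = -(y a * γ b) - if a = b then δ else 0)
    (h4 : ∀ a, δ * y a = y a * δ) :
    γ0 * lpr (fun t => θ t t + ci t * (y t * η t)) n = δ * (c0 + (n : Ω)) * lpr (fun t => θ t t) n := by
  -- centrality of ci
  have hcc : ∀ (t : ℕ) (x : Ω), Commute (c0 + (t : Ω)) x := fun t x =>
    (hc x).add_left (Nat.cast_commute t x)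
  have hq : ∀ t < n, ∀ x, ci t * x = x * ci t := by
    intro t ht x
    have e1 := hci t ht
    have e2 : ci t * (c0 + (t : Ω)) = 1 := by rw [← (hcc t (ci t)).eq]; exact e1
    calc ci t * x = ci t * (x * ((c0 + (t : Ω)) * ci t)) := by rw [e1, mul_one]
      _ = ci t * ((c0 + (t : Ω)) * x * ci t) := by rw [← mul_assoc x, (hcc t x).eq]
      _ = x * ci t := by rw [← mul_assoc, ← mul_assoc, e2, one_mul]
  set Θ : ℕ → ℕ → Ω := fun t a => θ t a + ci t * (y a * η t) with hΘ
  -- antisymmetry of Θ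
  have hqq : ∀ t, t + 1 < n → ci t - ci (t+1) - ci t * ci (t+1) = 0 := by
    intro t ht
    have e1 := hci t (by omega)
    have e2 := hci (t+1) ht
    have e3 : ci t * (c0 + (t : Ω)) = 1 := by rw [← (hcc t (ci t)).eq]; exact e1
    have e4 : ci t * ((c0 + ((t+1 : ℕ) : Ω)) * ci (t+1)) = ci t := by rw [e2, mul_one]
    have e5 : (c0 + ((t+1 : ℕ) : Ω)) = (c0 + (t : Ω)) + 1 := by push_cast; abel
    rw [e5, ← mul_assoc, mul_add, e3, add_mul, one_mul, mul_one] at e4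
    rw [sub_sub, sub_eq_zero]; exact e4.symm
  have key : ∀ t a b, t + 1 < n → Θ t a * Θ (t+1) b
      = θ t a * θ (t+1) b + (ci t - ci t * ci (t+1)) * (y a * η t * θ (t+1) b)
        - ci (t+1) * (y b * η t * θ (t+1) a) - ci t * ci (t+1) * (y a * y b * η t * η (t+1)) := by
    intro t a b ht
    have q1 := hq t (by omega)
    have q2 := hq (t+1) ht
    have a1 : θ t a * (ci (t+1) * (y b * η (t+1))) = - (ci (t+1) * (y b * η t * θ (t+1) a)) := by
      rw [← mul_assoc, ← q2, mul_assoc, ← mul_assoc (θ t a), hθy t a b (by omega), mul_assoc (y b),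
        hθη t a ht]
      noncomm_ring
    have a2 : y a * η t * (y b * η (t+1)) = - (y a * y b * η t * η (t+1)) - y a * η t * θ (t+1) b := by
      have : y a * η t * (y b * η (t+1)) = y a * (η t * y b) * η (t+1) := by noncomm_ring
      rw [this, hηy t b (by omega)]
      have : y a * (-(y b * η t) + θ t b) * η (t+1)
        = -(y a * y b * η t * η (t+1)) + y a * (θ t b * η (t+1)) := by noncomm_ring
      rw [this, hθη t b ht]; noncomm_ring
    have a3 : ci t * (y a * η t) * (ci (t+1) * (y b * η (t+1))) =
        ci t * ci (t+1) * (y a * η t * (y b * η (t+1))) := by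
      rw [mul_assoc, ← mul_assoc (y a * η t), ← q2]; simp only [mul_assoc]
    simp only [hΘ]
    rw [add_mul, mul_add, mul_add, a1, a3, a2]
    noncomm_ring
  have hΘΘ : ∀ t a b, t + 1 < n → Θ t a * Θ (t+1) b = -(Θ t b * Θ (t+1) a) := by
    intro t a b ht
    rw [← add_eq_zero_iff_eq_neg, key t a b ht, key t b a ht, hθθ t a b ht, hyy a b]
    have := hqq t ht
    have e : ∀ X Y : Ω, (ci t - ci (t+1) - ci t * ci (t+1)) * (X + Y) = 0 := by
      intro X Y; rw [this, zero_mul]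
    have := e (y a * η t * θ (t+1) b) (y b * η t * θ (t+1) a)
    rw [← this]
    noncomm_ring
  have hΘΘ0 : ∀ t a, t + 1 < n → Θ t a * Θ (t+1) a = 0 := by
    intro t a ht
    rw [key t a a ht, hθθ0 t a ht, hy2]
    have e : (ci t - ci (t+1) - ci t * ci (t+1)) * (y a * η t * θ (t+1) a) = 0 := by
      rw [hqq t ht, zero_mul]
    calc _ = (ci t - ci (t+1) - ci t * ci (t+1)) * (y a * η t * θ (t+1) a) := by
          simp only [zero_mul, mul_zero]; noncomm_ring
      _ = 0 := e
  have hZ : ∀ j k b, k + 1 + j = n → k < b → b < n → Θ k b * rp (fun t => Θ t t) (k+1) j = 0 := by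
    intro j
    induction j with
    | zero => intro k b h1 h2 h3; omega
    | succ j ih =>
      intro k b h1 h2 h3
      rw [rp, ← mul_assoc]
      by_cases hb : b = k+1
      · subst hb; rw [hΘΘ0 k _ (by omega), zero_mul]
      · rw [hΘΘ k b _ (by omega), neg_mul, mul_assoc, ih (k+1) b (by omega) (by omega) h3]
        simp
  set W : ℕ → Ω := fun k => lpr (fun t => θ t t) k with hW
  have hW1 : ∀ k b, b < k → k < n → W k * θ k b = 0 := by
    intro k
    induction k with
    | zero => intro b h; omega
    | succ k ih =>
      intro b h hk
      have : W (k+1) = W k * θ k k := rfl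
      rw [this, mul_assoc]
      by_cases hb : b = k
      · subst hb; rw [hθθ0 _ _ hk, mul_zero]
      · rw [hθθ _ _ _ hk, mul_neg, ← mul_assoc, ih b (by omega) (by omega)]; simp
  have hWy : ∀ k b, k ≤ n → W k * y b = y b * W k := by
    intro k b hk
    exact (lpr_commute (fun t ht => (hθy t t b (by omega)).symm)).symm
  have f4' : ∀ k, k < n → δ * W k * η k = - ∑ b ∈ Finset.range n, γ b * W k * θ k b := by
    intro k
    induction k with
    | zero => intro h; simpa [hW, lpr] using h2 h
    | succ k ih =>
      intro hk
      have : W (k+1) = W k * θ k k := rfl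
      rw [this]
      have := ih (by omega)
      calc δ * (W k * θ k k) * η (k+1) = δ * W k * (θ k k * η (k+1)) := by noncomm_ring
        _ = - (δ * W k * η k * θ (k+1) k) := by rw [hθη _ _ hk]; noncomm_ring
        _ = _ := by
          rw [this, neg_mul, neg_neg, Finset.sum_mul, ← Finset.sum_neg_distrib]
          refine Finset.sum_congr rfl fun b _ => ?_
          rw [mul_assoc, hθθ k b k hk]; noncomm_ring
  set A : ℕ → Ω := fun k => γ0 - ∑ a ∈ Finset.range k, y a * γ a with hA
  have hγ0 : ∀ k < n, γ0 * y k = y k * γ0 - y k * δ := by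
    intro k hk
    have e : γ0 = δ * c0 - ∑ b ∈ Finset.range n, γ b * y b := by rw [← h1]; abel
    have e2 : (∑ b ∈ Finset.range n, γ b * y b) * y k - y k * (∑ b ∈ Finset.range n, γ b * y b)
        = δ * y k := by
      rw [Finset.sum_mul, Finset.mul_sum, ← Finset.sum_sub_distrib]
      have : ∀ b ∈ Finset.range n, γ b * y b * y k - y k * (γ b * y b)
          = if k = b then δ * y b else 0 := by
        intro b _
        have : γ b * y b * y k = - (γ b * y k * y b) := by
          rw [mul_assoc, hyy b k]; noncomm_ring
        rw [this, h3 k hk b]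
        split_ifs <;> noncomm_ring
      rw [Finset.sum_congr rfl this]
      simp [hk]
    have e3 : δ * c0 * y k = y k * (δ * c0) := by
      rw [mul_assoc, (hc _).eq, ← mul_assoc, h4, mul_assoc]
    rw [← h4 k, ← e2, e, sub_mul, mul_sub, e3]; abel
  have f1 : ∀ k < n, A k * y k = y k * (A k - δ) := by
    intro k hk
    simp only [hA]
    rw [sub_mul, hγ0 k hk, Finset.sum_mul, mul_sub, mul_sub, Finset.mul_sum]
    have : ∑ i ∈ Finset.range k, y i * γ i * y k = ∑ i ∈ Finset.range k, y k * (y i * γ i) := by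
      refine Finset.sum_congr rfl fun i hi => ?_
      have hik : k ≠ i := by have := Finset.mem_range.1 hi; omega
      rw [mul_assoc, h3 k hk i, if_neg hik, ← mul_assoc (y k), hyy k i]; noncomm_ring
    rw [this]; abel
  have f3 : ∀ k, k ≤ n → A k = δ * (c0 + (k : Ω)) - ∑ a ∈ Finset.Ico k n, γ a * y a := by
    intro k hk
    have e : ∑ b ∈ Finset.range n, γ b * y b = ∑ b ∈ Finset.range k, γ b * y b
        + ∑ a ∈ Finset.Ico k n, γ a * y a := (Finset.sum_range_add_sum_Ico _ hk).symm
    have e2 : ∑ a ∈ Finset.range k, y a * γ a = - ∑ b ∈ Finset.range k, γ b * y b - (k : Ω) * δ := by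
      rw [← Finset.sum_neg_distrib]
      have : ∀ a ∈ Finset.range k, y a * γ a = - (γ a * y a) - δ := by
        intro a ha
        have := Finset.mem_range.1 ha
        rw [h3 a (by omega) a, if_pos rfl]; abel
      rw [Finset.sum_congr rfl this, Finset.sum_sub_distrib]; simp
    simp only [hA]
    rw [e2, mul_add, ← h1, e, (Nat.cast_commute k δ).eq]; abel
  have f4 : ∀ k, k < n → δ * W k * η k = - ∑ b ∈ Finset.Ico k n, γ b * W k * θ k b := by
    intro k hk
    rw [f4' k hk, ← Finset.sum_range_add_sum_Ico _ hk.le]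
    rw [Finset.sum_eq_zero, zero_add]
    intro b hb
    rw [mul_assoc, hW1 k b (Finset.mem_range.1 hb) hk, mul_zero]
  have step : ∀ j k, k + j = n → A k * W k * rp (fun t => Θ t t) k j = A n * W n := by
    intro j
    induction j with
    | zero => intro k h; simp at h; subst h; simp [rp]
    | succ j ih =>
      intro k h
      have hk : k < n := by omega
      rw [← ih (k+1) (by omega)]
      have eW : W (k+1) = W k * θ k k := rfl
      have eA : A (k+1) = A k - y k * γ k := by simp only [hA, Finset.sum_range_succ]; abel
      rw [eW, eA, rp]
      set Z := rp (fun t => Θ t t) (k+1) j with hZdef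
      have q1 := hq k hk
      -- main computation
      have g1 : ci k * ((A k - δ) * (W k * η k)) * Z
          = - (ci k * (δ * (W k * η k)) * Z) - γ k * (W k * Θ k k) * Z := by
        have s1 : ci k * (∑ a ∈ Finset.Ico k n, γ a * y a) * (W k * η k) * Z
            = γ k * (W k * Θ k k) * Z - ∑ a ∈ Finset.Ico k n, γ a * W k * θ k a * Z := by
          have t1 : ∀ a ∈ Finset.Ico k n, ci k * (γ a * y a) * (W k * η k) * Z
              = γ a * (W k * (Θ k a * Z)) - γ a * W k * θ k a * Z := by
            intro a ha
            have : ci k * (γ a * y a) * (W k * η k) * Z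
                = γ a * (W k * (ci k * (y a * η k))) * Z := by
              have u1 : ci k * (γ a * y a) * (W k * η k) = ci k * (γ a * ((y a * W k) * η k)) := by
                noncomm_ring
              rw [u1, ← hWy k a hk.le, q1, q1]; noncomm_ring
            rw [this]; simp only [hΘ]; noncomm_ring
          rw [Finset.mul_sum, Finset.sum_mul, Finset.sum_mul, Finset.sum_congr rfl t1,
            Finset.sum_sub_distrib]
          congr 1
          rw [Finset.sum_eq_single k]
          · noncomm_ring
          · intro b hb hbk
            have := Finset.mem_Ico.1 hb
            rw [hZ j k b (by omega) (by omega) this.2]; simp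
          · intro hh; simp at hh; omega
        have s2 : ∑ a ∈ Finset.Ico k n, γ a * W k * θ k a * Z = - (δ * W k * η k * Z) := by
          rw [f4 k hk, ← Finset.sum_mul]; simp
        have s3 : ci k * (δ * (c0 + (k : Ω))) = δ := by
          rw [q1, mul_assoc, hci k hk, mul_one]
        have s4 : ci k * ((A k - δ) * (W k * η k)) * Z =
            (ci k * (δ * (c0 + (k : Ω)))) * (W k * η k) * Z
             - ci k * (∑ a ∈ Finset.Ico k n, γ a * y a) * (W k * η k) * Z
             - ci k * (δ * (W k * η k)) * Z := by
          rw [f3 k hk.le]; noncomm_ring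
        rw [s4, s3, s1, s2]; noncomm_ring
      have g2 : A k * W k * (ci k * (y k * η k) * Z)
          = y k * (ci k * ((A k - δ) * (W k * η k)) * Z) := by
        have : A k * W k * (ci k * (y k * η k) * Z)
            = A k * (W k * ci k) * y k * η k * Z := by noncomm_ring
        rw [this, ← q1, ← mul_assoc, ← q1]
        have : ci k * A k * W k * y k * η k * Z = ci k * A k * (W k * y k) * η k * Z := by noncomm_ring
        rw [this, hWy k k hk.le]
        have : ci k * A k * (y k * W k) * η k * Z = ci k * (A k * y k) * W k * η k * Z := by
          noncomm_ring
        rw [this, f1 k hk, ← mul_assoc, q1 (y k)]; noncomm_ring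
      have g3 : y k * γ k * y k = - (y k * δ) := by
        rw [mul_assoc, h3 k hk k, if_pos rfl, mul_sub, mul_neg, ← mul_assoc, hy2]; simp
      have g4 : A k * W k * (Θ k k * Z) = A k * W k * θ k k * Z
          + A k * W k * (ci k * (y k * η k) * Z) := by simp only [hΘ]; noncomm_ring
      have g5 : y k * (γ k * (W k * Θ k k) * Z) = y k * γ k * W k * θ k k * Z
          + ci k * (y k * γ k * y k) * W k * η k * Z := by
        have : y k * (γ k * (W k * Θ k k) * Z) = y k * γ k * W k * θ k k * Z
          + y k * γ k * (W k * (ci k * (y k * η k))) * Z := by simp only [hΘ]; noncomm_ring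
        rw [this]
        congr 1
        have : W k * (ci k * (y k * η k)) = ci k * (y k * (W k * η k)) := by
          rw [← mul_assoc, ← q1, mul_assoc, ← mul_assoc (W k), hWy k k hk.le, mul_assoc (y k)]
        rw [this, ← mul_assoc (y k * γ k), ← q1]; noncomm_ring
      have g6 : y k * (ci k * (δ * (W k * η k)) * Z) = ci k * (y k * δ) * W k * η k * Z := by
        rw [← mul_assoc, ← mul_assoc, ← q1]; noncomm_ring
      rw [g4, g2, g1, mul_sub, mul_neg, g5, g6, g3]
      noncomm_ring
  have fin := step n 0 (by omega)
  have e0 : rp (fun t => Θ t t) 0 n = lpr (fun t => Θ t t) n := by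
    have := lpr_rp (fun t => Θ t t) 0 n
    simpa [lpr] using this
  rw [e0, f3 n le_rfl] at fin
  simpa [hA, hW, lpr] using fin
end odd


set_option maxHeartbeats 1000000
noncomputable section
open scoped TensorProduct

structure Grass (B : Type) [Ring B] (k : ℕ) where
  Om : Type
  [ring : Ring Om]
  io : B →+* Om
  ch : Fin k → Om
  La : Om →+ B
  ch_anti : ∀ i j, ch i * ch j = -(ch j * ch i)
  ch_sq : ∀ i, ch i * ch i = 0
  ch_comm : ∀ i b, ch i * io b = io b * ch i
  La_left : ∀ b x, La (io b * x) = b * La x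
  La_right : ∀ b x, La (x * io b) = La x * b
  tf : ∀ x : Om, x + x = 0 → x = 0
  io_central : ∀ b : B, (∀ x, b * x = x * b) → ∀ z, io b * z = z * io b
  La_prod : ∀ b : Fin k → Fin k → B,
    La ((List.ofFn fun t => ∑ i, io (b t i) * ch i).prod) =
      ∑ σ : Equiv.Perm (Fin k), ((Equiv.Perm.sign σ : ℤˣ) : ℤ) •
        (List.ofFn fun t => b t (σ t)).prod

attribute [instance] Grass.ring

def grEll (k : ℕ) : ExteriorAlgebra ℂ (Fin k → ℂ) →ₗ[ℂ] ℂ :=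
  ExteriorAlgebra.liftAlternating (R := ℂ) (M := Fin k → ℂ) (N := ℂ)
    (fun i => if h : i = k then h ▸ (Matrix.detRowAlternating (R := ℂ) (n := Fin k)) else 0)

lemma grEll_apply (k : ℕ) (v : Fin k → Fin k → ℂ) :
    grEll k ((List.ofFn fun t => ExteriorAlgebra.ι ℂ (v t)).prod) = Matrix.det (Matrix.of v) := by
  have := ExteriorAlgebra.ιMulti_apply (R := ℂ) (M := Fin k → ℂ) (n := k) v
  rw [← this, grEll, ExteriorAlgebra.liftAlternating_apply_ιMulti]
  simp
  rfl

lemma tmul_list_prod {B C : Type} [Ring B] [Algebra ℂ B] [Ring C] [Algebra ℂ C] :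
    ∀ (k : ℕ) (b : Fin k → B) (c : Fin k → C),
    (List.ofFn fun t => (b t ⊗ₜ[ℂ] c t : B ⊗[ℂ] C)).prod = (List.ofFn b).prod ⊗ₜ (List.ofFn c).prod
  | 0, b, c => by simp [Algebra.TensorProduct.one_def]
  | k+1, b, c => by
    simp only [List.ofFn_succ, List.prod_cons]
    rw [tmul_list_prod k, Algebra.TensorProduct.tmul_mul_tmul]

lemma list_prod_sum {Ω : Type} [Ring Ω] [Algebra ℂ Ω] {k : ℕ} (g : Fin k → Fin k → Ω) :
    (List.ofFn fun t => ∑ i, g t i).prod = ∑ f : Fin k → Fin k, (List.ofFn fun t => g t (f t)).prod := by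
  have := (MultilinearMap.mkPiAlgebraFin ℂ k Ω).map_sum (g := g)
  simpa [MultilinearMap.mkPiAlgebraFin_apply] using this

def grLa (B : Type) [Ring B] [Algebra ℂ B] (k : ℕ) :
    B ⊗[ℂ] ExteriorAlgebra ℂ (Fin k → ℂ) →ₗ[ℂ] B :=
  (TensorProduct.rid ℂ B).toLinearMap ∘ₗ LinearMap.lTensor B (grEll k)

lemma grLa_tmul (B : Type) [Ring B] [Algebra ℂ B] (k : ℕ) (b : B) (x) :
    grLa B k (b ⊗ₜ x) = grEll k x • b := by
  simp [grLa]

def grass (B : Type) [Ring B] [Algebra ℂ B] (k : ℕ) : Grass B k where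
  Om := B ⊗[ℂ] ExteriorAlgebra ℂ (Fin k → ℂ)
  io := (Algebra.TensorProduct.includeLeft (R := ℂ) (S := ℂ) (A := B)
    (B := ExteriorAlgebra ℂ (Fin k → ℂ))).toRingHom
  ch i := 1 ⊗ₜ ExteriorAlgebra.ι ℂ (Pi.single i 1)
  La := (grLa B k).toAddMonoidHom
  ch_anti i j := by
    simp only [Algebra.TensorProduct.tmul_mul_tmul, one_mul]
    rw [← TensorProduct.tmul_neg]
    congr 1
    rw [eq_neg_iff_add_eq_zero]
    exact ExteriorAlgebra.ι_add_mul_swap _ _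
  ch_sq i := by
    simp [Algebra.TensorProduct.tmul_mul_tmul]
  ch_comm i b := by
    simp [Algebra.TensorProduct.tmul_mul_tmul]
  La_left b x := by
    induction x with
    | zero => simp
    | add x y hx hy => rw [mul_add, map_add, hx, hy, map_add, mul_add]
    | tmul c y => simp [grLa_tmul]
  La_right b x := by
    induction x with
    | zero => simp
    | add x y hx hy => rw [add_mul, map_add, hx, hy, map_add, add_mul]
    | tmul c y => simp [grLa_tmul]
  tf x h := by
    have : (2 : ℂ) • x = 0 := by rw [two_smul, h]
    have h2 : ((2:ℂ)⁻¹ * 2) • x = 0 := by rw [mul_smul, this, smul_zero]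
    rwa [inv_mul_cancel₀ two_ne_zero, one_smul] at h2
  io_central b hb z := by
    induction z with
    | zero => simp
    | add x y hx hy => rw [mul_add, add_mul, hx, hy]
    | tmul c y => simp [hb]
  La_prod b := by
    rw [list_prod_sum]
    simp only [AlgHom.toRingHom_eq_coe, RingHom.coe_coe, Algebra.TensorProduct.includeLeft_apply,
      Algebra.TensorProduct.tmul_mul_tmul, mul_one, one_mul, LinearMap.toAddMonoidHom_coe, map_sum,
      tmul_list_prod, grLa_tmul, grEll_apply]
    have : ∀ f : Fin k → Fin k, (Matrix.det (Matrix.of (fun t => (Pi.single (f t) (1:ℂ) : Fin k → ℂ))))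
        = ∑ σ : Equiv.Perm (Fin k), if f = σ then (((Equiv.Perm.sign σ : ℤˣ) : ℤ) : ℂ) else 0 := by
      intro f
      rw [← Matrix.det_transpose, Matrix.det_apply']
      refine Finset.sum_congr rfl fun σ _ => ?_
      simp only [Matrix.transpose_apply, Matrix.of_apply]
      split_ifs with h
      · rw [Finset.prod_eq_one]; simp
        intro i _; rw [h]; simp
      · have : ∃ i, f i ≠ σ i := by
          by_contra hh; push Not at hh; exact h (funext hh)
        obtain ⟨i, hi⟩ := this
        rw [Finset.prod_eq_zero (Finset.mem_univ i)]; simp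
        simp [Pi.single_apply, Ne.symm hi]
    simp only [this, Finset.sum_smul]
    rw [Finset.sum_comm]
    refine Finset.sum_congr rfl fun σ _ => ?_
    simp [ite_smul]
    rcases Int.units_eq_one_or (Equiv.Perm.sign σ) with h | h <;> simp [h]

end

set_option maxHeartbeats 1000000
set_option linter.unusedSectionVars false
noncomputable section

lemma sq1 {Ω : Type} [Ring Ω] (P : ℕ → ℕ → Ω) (k : ℕ)
    (h : ∀ t < k, P 0 t * P (t+1) (t+1) = -(P (t+1) t * P 0 (t+1))) :
    P 0 0 * lpr (fun t => P (t+1) (t+1)) k = (-1)^k * (lpr (fun t => P (t+1) t) k * P 0 k) := by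
  induction k with
  | zero => simp [lpr]
  | succ k ih =>
    rw [lpr, ← mul_assoc, ih (fun t ht => h t (by omega)), lpr, mul_assoc, mul_assoc, h k (by omega), pow_succ]
    noncomm_ring

lemma sq2 {Ω : Type} [Ring Ω] (P : ℕ → ℕ → Ω) (k : ℕ)
    (h : ∀ j < k, ∀ t < k, P (t+1) t * P (j+1) (t+1) = -(P (j+1) t * P (t+1) (t+1)))
    (h0 : ∀ t < k, P (t+1) t * P (t+1) (t+1) = 0) :
    ∀ l, ∀ j < l, l ≤ k → lpr (fun t => P (t+1) t) l * P (j+1) l = 0 := by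
  intro l
  induction l with
  | zero => intro j hj; omega
  | succ l ih =>
    intro j hj hl
    rw [lpr, mul_assoc]
    by_cases hjl : j = l
    · subst hjl; rw [h0 j (by omega), mul_zero]
    · rw [h j (by omega) l (by omega), mul_neg, ← mul_assoc, ih j (by omega) (by omega)]; simp

lemma sq3 {Ω : Type} [Ring Ω] (P Q : ℕ → Ω) (q : Ω) (k : ℕ)
    (h : ∀ t < k, P t * q = -(q * Q t)) :
    lpr P k * q = (-1)^k * (q * lpr Q k) := by
  induction k with
  | zero => simp [lpr]
  | succ k ih =>
    have := ih (fun t ht => h t (by omega))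
    rw [lpr, lpr, mul_assoc, h k (by omega), mul_neg, ← mul_assoc, this, pow_succ]
    noncomm_ring

/-- column determinant -/
def cdet {B : Type} [Ring B] {m : ℕ} (M : Fin m → Fin m → B) (v : B) : B :=
  ∑ σ : Equiv.Perm (Fin m), ((Equiv.Perm.sign σ : ℤˣ) : ℤ) •
      (List.ofFn fun t : Fin m => M (σ t) t - (if σ t = t then v + ((t : ℕ) : B) else 0)).prod

section
variable {B : Type} [Ring B] [Algebra ℂ B] {k : ℕ}

def PS (gr : Grass B k) (M : Fin k → Fin k → B) (j : Fin k) (x : B) : gr.Om :=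
  ∑ i, gr.io (M i j - if i = j then x else 0) * gr.ch i

lemma PS_eq (gr : Grass B k) (M : Fin k → Fin k → B) (j : Fin k) (x : B) :
    PS gr M j x = PS gr M j 0 - gr.io x * gr.ch j := by
  simp only [PS, map_sub, sub_mul, Finset.sum_sub_distrib]
  have : ∑ i, gr.io (if i = j then x else 0) * gr.ch i = gr.io x * gr.ch j := by
    rw [Finset.sum_eq_single j]
    · simp
    · intro b _ hb; simp [hb]
    · simp
  rw [this]; simp

lemma PS_ch (gr : Grass B k) (M : Fin k → Fin k → B) (i j : Fin k) (x : B) :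
    gr.ch i * PS gr M j x = - (PS gr M j x * gr.ch i) := by
  simp only [PS]
  rw [Finset.mul_sum, Finset.sum_mul, ← Finset.sum_neg_distrib]
  refine Finset.sum_congr rfl fun l _ => ?_
  rw [← mul_assoc, gr.ch_comm, mul_assoc, gr.ch_anti]; noncomm_ring

lemma PS_io (gr : Grass B k) (M : Fin k → Fin k → B) (j : Fin k) (x b : B)
    (h : ∀ i, b * M i j = M i j * b) (hx : b * x = x * b) :
    gr.io b * PS gr M j x = PS gr M j x * gr.io b := by
  simp only [PS]
  rw [Finset.mul_sum, Finset.sum_mul]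
  refine Finset.sum_congr rfl fun l _ => ?_
  rw [← mul_assoc, ← map_mul, mul_assoc, gr.ch_comm, ← mul_assoc, ← map_mul]
  congr 2
  split_ifs
  · rw [mul_sub, sub_mul, h, hx]
  · simp [h]

lemma PS_comm0 (gr : Grass B k) (M : Fin k → Fin k → B)
    (hMM : ∀ k i l j, M k i * M l j - M l j * M k i
      = (if i = l then M k j else 0) - (if j = k then M l i else 0)) (i j : Fin k) :
    PS gr M i 0 * PS gr M j 0 + PS gr M j 0 * PS gr M i 0 =
      PS gr M i 0 * gr.ch j + PS gr M j 0 * gr.ch i := by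
  simp only [PS, ite_self, sub_zero]
  have e1 : (∑ a, gr.io (M a i) * gr.ch a) * (∑ b, gr.io (M b j) * gr.ch b)
     = ∑ a, ∑ b, gr.io (M a i * M b j) * (gr.ch a * gr.ch b) := by
    rw [Finset.sum_mul]
    refine Finset.sum_congr rfl fun a _ => ?_
    rw [Finset.mul_sum]
    refine Finset.sum_congr rfl fun b _ => ?_
    rw [map_mul, mul_assoc, ← mul_assoc (gr.ch a), gr.ch_comm]; noncomm_ring
  have e2 : (∑ a, gr.io (M a j) * gr.ch a) * (∑ b, gr.io (M b i) * gr.ch b)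
     = ∑ a, ∑ b, - (gr.io (M b j * M a i) * (gr.ch a * gr.ch b)) := by
    rw [Finset.sum_mul, Finset.sum_comm]
    refine Finset.sum_congr rfl fun a _ => ?_
    rw [Finset.mul_sum]
    refine Finset.sum_congr rfl fun b _ => ?_
    rw [map_mul, mul_assoc, ← mul_assoc (gr.ch a), gr.ch_comm, mul_assoc, gr.ch_anti b a]; noncomm_ring
  rw [e1, e2, ← Finset.sum_add_distrib]
  have e3 : ∀ a ∈ Finset.univ, ((∑ b, gr.io (M a i * M b j) * (gr.ch a * gr.ch b))
      + ∑ b, - (gr.io (M b j * M a i) * (gr.ch a * gr.ch b)))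
      = gr.io (M a j) * gr.ch a * gr.ch i - ∑ b, gr.io (if j = a then M b i else 0) * (gr.ch a * gr.ch b) := by
    intro a _
    rw [← Finset.sum_add_distrib]
    have : ∀ b ∈ Finset.univ, gr.io (M a i * M b j) * (gr.ch a * gr.ch b)
      + - (gr.io (M b j * M a i) * (gr.ch a * gr.ch b))
      = gr.io (if i = b then M a j else 0) * (gr.ch a * gr.ch b) -
        gr.io (if j = a then M b i else 0) * (gr.ch a * gr.ch b) := by
      intro b _
      rw [← sub_eq_add_neg, ← sub_mul, ← sub_mul, ← map_sub, ← map_sub, hMM]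
    rw [Finset.sum_congr rfl this, Finset.sum_sub_distrib]
    congr 1
    rw [Finset.sum_eq_single i]
    · simp [mul_assoc]
    · intro b _ hb; simp [Ne.symm hb]
    · simp
  rw [Finset.sum_congr rfl e3, Finset.sum_sub_distrib, Finset.sum_comm]
  have e4 : ∑ y, ∑ x, gr.io (if j = x then M y i else 0) * (gr.ch x * gr.ch y)
      = - ((∑ a, gr.io (M a i) * gr.ch a) * gr.ch j) := by
    rw [Finset.sum_mul, ← Finset.sum_neg_distrib]
    refine Finset.sum_congr rfl fun a _ => ?_
    rw [Finset.sum_eq_single j]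
    · rw [gr.ch_anti]; simp [mul_assoc]
    · intro b _ hb; simp [Ne.symm hb]
    · simp
  rw [e4, Finset.sum_mul, Finset.sum_mul]; abel

lemma PS_comm (gr : Grass B k) (M : Fin k → Fin k → B)
    (hMM : ∀ k i l j, M k i * M l j - M l j * M k i
      = (if i = l then M k j else 0) - (if j = k then M l i else 0)) (i j : Fin k)
    (x : B) (hx : ∀ b, x * b = b * x) :
    PS gr M i x * PS gr M j (x+1) = - (PS gr M j x * PS gr M i (x+1)) := by
  have c := PS_comm0 gr M hMM i j
  rw [PS_eq gr M i x, PS_eq gr M j x, PS_eq gr M i (x+1), PS_eq gr M j (x+1)]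
  simp only [map_add, map_one]
  have x1 : gr.io x * PS gr M i 0 = PS gr M i 0 * gr.io x := PS_io gr M i 0 x (fun _ => hx _) (by simp)
  have x2 : gr.io x * PS gr M j 0 = PS gr M j 0 * gr.io x := PS_io gr M j 0 x (fun _ => hx _) (by simp)
  have p1 := PS_ch gr M i i 0
  have p2 := PS_ch gr M j j 0
  have p3 := PS_ch gr M i j 0
  have p4 := PS_ch gr M j i 0
  have c1 := gr.ch_comm i x
  have c2 := gr.ch_comm j x
  have a1 := gr.ch_anti i j
  set X := gr.io x
  set p := PS gr M i 0
  set q := PS gr M j 0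
  set a := gr.ch i
  set b := gr.ch j
  rw [eq_neg_iff_add_eq_zero]
  have : (p - X * a) * (q - (X + 1) * b) + (q - X * b) * (p - (X + 1) * a)
    = (p * q + q * p) - p * X * b - p * b - X * (a * q) + X * (a * X) * b + X * (a * b)
      - q * X * a - q * a - X * (b * p) + X * (b * X) * a + X * (b * a) := by noncomm_ring
  rw [this, c, ← x1, ← x2, p3, p4, c1, c2, a1]
  have : X * (X * b) * a = X * X * (b * a) := by noncomm_ring
  rw [this]
  have : X * (X * a) * b = X * X * (a * b) := by noncomm_ring
  rw [this, a1]
  noncomm_ring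

lemma PS_sq (gr : Grass B k) (M : Fin k → Fin k → B)
    (hMM : ∀ k i l j, M k i * M l j - M l j * M k i
      = (if i = l then M k j else 0) - (if j = k then M l i else 0)) (j : Fin k)
    (x : B) (hx : ∀ b, x * b = b * x) :
    PS gr M j x * PS gr M j (x+1) = 0 := by
  apply gr.tf
  rw [← eq_neg_iff_add_eq_zero]; exact PS_comm gr M hMM j j x hx

lemma La_cdet (gr : Grass B k) (M : Fin k → Fin k → B) (v : B) :
    gr.La ((List.ofFn fun t : Fin k => PS gr M t (v + ((t : ℕ) : B))).prod) = cdet M v := by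
  have := gr.La_prod (fun t i => M i t - if i = t then v + ((t : ℕ) : B) else 0)
  exact this

lemma La_cons {m : ℕ} (gr : Grass B (m+1)) (F : Fin m → Fin m → B) (y : Fin m → B) (v : B) :
    gr.La ((gr.ch 0 + ∑ i, gr.io (y i) * gr.ch i.succ) * (List.ofFn fun t : Fin m =>
      ∑ i, gr.io (F i t - if i = t then v + ((t : ℕ) : B) else 0) * gr.ch i.succ).prod) = cdet F v := by
  have := gr.La_prod (Fin.cons (Fin.cons 1 y)
    (fun t => Fin.cons 0 (fun i => F i t - if i = t then v + ((t : ℕ) : B) else 0)))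
  simp only [List.ofFn_succ, List.prod_cons, Fin.cons_zero, Fin.cons_succ, Fin.sum_univ_succ,
    map_one, map_zero, one_mul, zero_mul, zero_add] at this
  rw [this, cdet]
  rw [← Equiv.sum_comp (Equiv.Perm.decomposeFin (n := m)).symm, Fintype.sum_prod_type, Finset.sum_eq_single 0]
  · refine Finset.sum_congr rfl fun σ _ => ?_
    simp [Equiv.Perm.decomposeFin.symm_sign]
  · intro p _ hp
    refine Finset.sum_eq_zero fun σ _ => ?_
    obtain ⟨p', rfl⟩ := Fin.exists_succ_eq.2 hp
    have : (0 : B) ∈ (List.ofFn fun i : Fin m => (Fin.cons 0 (fun j => F j i - if j = i then v + ((i : ℕ) : B) else 0)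
        : Fin (m+1) → B) ((Equiv.Perm.decomposeFin.symm (p'.succ, σ)) i.succ)) := by
      rw [List.mem_ofFn]
      refine ⟨σ.symm p', ?_⟩
      simp
    rw [List.prod_eq_zero this]; simp
  · simp

lemma PS_q {m : ℕ} (gr : Grass B (m+1)) (M : Fin (m+1) → Fin (m+1) → B) (F : Fin m → Fin m → B)
    (y d : Fin m → B)
    (h0 : ∀ j, M 0 (Fin.succ j) = d j)
    (h1 : ∀ i j, M (Fin.succ i) (Fin.succ j) = y i * d j + F i j)
    (hyy : ∀ i j, y i * y j = y j * y i)
    (hdy : ∀ i j, d j * y i = y i * d j + if i = j then 1 else 0)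
    (hFy : ∀ i j k, F i j * y k = y k * F i j) (j : Fin m) (x : B) (hx : ∀ b, x * b = b * x) :
    PS gr M (Fin.succ j) x * (gr.ch 0 + ∑ i, gr.io (y i) * gr.ch (Fin.succ i)) =
     -((gr.ch 0 + ∑ i, gr.io (y i) * gr.ch (Fin.succ i)) *
       ∑ i, gr.io (F i j - if i = j then x + 1 else 0) * gr.ch i.succ) := by
  set q := gr.ch 0 + ∑ i, gr.io (y i) * gr.ch (Fin.succ i) with hq
  have hΦ : ∑ i, gr.io (F i j - if i = j then x + 1 else 0) * gr.ch i.succ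
      = ∑ i, gr.io (F i j) * gr.ch i.succ - (gr.io x + 1) * gr.ch j.succ := by
    simp only [map_sub, sub_mul, Finset.sum_sub_distrib]
    congr 1
    rw [Finset.sum_eq_single j]
    · simp
    · intro b _ hb; simp [hb]
    · simp
  have hchq : ∀ l, gr.ch l * q = - (q * gr.ch l) := by
    intro l
    rw [hq, mul_add, add_mul, neg_add, gr.ch_anti l 0, Finset.mul_sum, Finset.sum_mul,
      ← Finset.sum_neg_distrib]
    congr 1
    refine Finset.sum_congr rfl fun i _ => ?_
    rw [← mul_assoc, gr.ch_comm, mul_assoc, gr.ch_anti l]; noncomm_ring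
  have hbq : ∀ b, (∀ i, b * y i = y i * b) → gr.io b * q = q * gr.io b := by
    intro b hb
    rw [hq, mul_add, add_mul, gr.ch_comm, Finset.mul_sum, Finset.sum_mul]
    congr 1
    refine Finset.sum_congr rfl fun i _ => ?_
    rw [← mul_assoc, ← map_mul, hb, map_mul, mul_assoc, mul_assoc, gr.ch_comm]
  have hqq : q * q = 0 := by
    apply gr.tf
    rw [← eq_neg_iff_add_eq_zero]
    have u1 : q * q = gr.ch 0 * q + (∑ i, gr.io (y i) * gr.ch (Fin.succ i)) * q := by
      rw [← add_mul, ← hq]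
    have u2 : q * q = q * gr.ch 0 + q * (∑ i, gr.io (y i) * gr.ch (Fin.succ i)) := by
      rw [← mul_add, ← hq]
    refine u1.trans (Eq.trans ?_ (congrArg Neg.neg u2.symm))
    rw [neg_add, hchq, Finset.sum_mul, Finset.mul_sum, ← Finset.sum_neg_distrib]
    congr 1
    refine Finset.sum_congr rfl fun i _ => ?_
    rw [mul_assoc, hchq, ← mul_assoc q, ← hbq (y i) (fun k => hyy _ _)]; noncomm_ring
  have hD : gr.io (d j) * q = q * gr.io (d j) + gr.ch j.succ := by
    rw [hq, mul_add, add_mul, gr.ch_comm, add_assoc]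
    congr 1
    rw [Finset.mul_sum, Finset.sum_mul]
    have : ∀ i ∈ Finset.univ, gr.io (d j) * (gr.io (y i) * gr.ch i.succ) =
        gr.io (y i) * gr.ch i.succ * gr.io (d j) + (if i = j then gr.ch i.succ else 0) := by
      intro i _
      rw [← mul_assoc, ← map_mul, hdy, mul_assoc, gr.ch_comm, map_add, add_mul, map_mul]
      split_ifs <;> simp [mul_assoc]
    rw [Finset.sum_congr rfl this, Finset.sum_add_distrib]
    simp
  have hF : (∑ i, gr.io (F i j) * gr.ch i.succ) * q = - (q * ∑ i, gr.io (F i j) * gr.ch i.succ) := by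
    rw [Finset.sum_mul, Finset.mul_sum, ← Finset.sum_neg_distrib]
    refine Finset.sum_congr rfl fun i _ => ?_
    rw [mul_assoc, hchq, ← mul_assoc q, ← hbq (F i j) (fun k => hFy _ _ _)]; noncomm_ring
  have hPS : PS gr M j.succ x = q * gr.io (d j) + (∑ i, gr.io (F i j) * gr.ch i.succ) - gr.io x * gr.ch j.succ := by
    rw [PS_eq, PS, Fin.sum_univ_succ]
    congr 1
    simp only [h0, h1, ite_self, sub_zero, hq, add_mul, gr.ch_comm, add_assoc, map_add, map_mul,
      Finset.sum_add_distrib, Finset.sum_mul]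
    simp only [mul_assoc, gr.ch_comm]
  have hX := hbq x (fun i => hx _)
  have hc := hchq j.succ
  rw [hPS, hΦ]
  generalize (∑ i, gr.io (F i j) * gr.ch i.succ) = Φ at *
  have e1 : (q * gr.io (d j) + Φ - gr.io x * gr.ch j.succ) * q =
    q * (gr.io (d j) * q) + Φ * q - gr.io x * (gr.ch j.succ * q) := by noncomm_ring
  rw [e1, hD, hF, hc, mul_add, ← mul_assoc q q, hqq, mul_neg, ← mul_assoc (gr.io x), hX]
  noncomm_ring

theorem evenSector (m : ℕ) (M : Fin (m+1) → Fin (m+1) → B) (F : Fin m → Fin m → B)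
    (y d : Fin m → B) (v : B) (hv : ∀ b, v * b = b * v)
    (hMM : ∀ k i l j, M k i * M l j - M l j * M k i
      = (if i = l then M k j else 0) - (if j = k then M l i else 0))
    (h0 : ∀ j, M 0 (Fin.succ j) = d j)
    (h1 : ∀ i j, M (Fin.succ i) (Fin.succ j) = y i * d j + F i j)
    (hyy : ∀ i j, y i * y j = y j * y i)
    (hdy : ∀ i j, d j * y i = y i * d j + if i = j then 1 else 0)
    (hFy : ∀ i j k, F i j * y k = y k * F i j) :
    ∃ g : Fin (m+1) → B,
      (∑ i, g i * (M i 0 - if i = 0 then v + (m : B) else 0) = cdet M v) ∧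
      (∀ j, ∑ i, g i * (M i (Fin.succ j) - if i = Fin.succ j then v + (m : B) else 0) = 0) ∧
      (g 0 + ∑ i, g (Fin.succ i) * y i = cdet F (v+1)) ∧
      (∀ x, (∀ i j, x * M i (Fin.succ j) = M i (Fin.succ j) * x) → ∀ i, x * g i = g i * x) := by
  set gr := grass B (m+1)
  let P : ℕ → ℕ → gr.Om := fun j t => if h : j < m+1 then PS gr M ⟨j, h⟩ (v + (t:B)) else 0
  have hvt : ∀ (t : ℕ) (b : B), (v + (t:B)) * b = b * (v + (t:B)) := by
    intro t b; rw [add_mul, mul_add, hv, (Nat.cast_commute t b).eq]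
  have hP : ∀ (j : Fin (m+1)) t, P j t = PS gr M j (v + (t:B)) := by
    intro j t; simp only [P]; rw [dif_pos j.2]
  have hPP : ∀ i j t, P i t * P j (t+1) = -(P j t * P i (t+1)) := by
    intro i j t
    simp only [P]
    split_ifs with hi hj
    · have := PS_comm gr M hMM ⟨i, hi⟩ ⟨j, hj⟩ _ (hvt t)
      rw [add_assoc] at this
      simpa using this
    all_goals simp
  have hPP0 : ∀ i t, P i t * P i (t+1) = 0 := fun i t => gr.tf _ (by
    rw [← eq_neg_iff_add_eq_zero]; exact hPP i i t)
  set G := lpr (fun t => P (t+1) t) m with hG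
  have s1 := sq1 P m (fun t _ => hPP _ _ _)
  have s2 := sq2 P m (fun j _ t _ => hPP _ _ _) (fun t _ => hPP0 _ _) m
  have hprod : cdet M v = gr.La ((-1)^m * (G * P 0 m)) := by
    rw [← La_cdet gr, List.ofFn_succ, List.prod_cons, ← s1]
    have e0 : PS gr M 0 (v + (((0 : Fin (m+1)) : ℕ) : B)) = P 0 0 := (hP 0 0).symm
    rw [e0]
    congr 2
    apply ofFn_prod_lpr
    intro t; exact (hP t.succ (t+1)).symm
  have hLs : ∀ (z : gr.Om), gr.La ((-1)^m * z) = (-1)^m * gr.La z := by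
    intro z
    have := gr.La_left ((-1)^m) z
    simpa using this
  have hGP : ∀ (j : Fin (m+1)) x, gr.La (G * PS gr M j x) = ∑ i, gr.La (G * gr.ch i) * (M i j - if i = j then x else 0) := by
    intro j x
    rw [PS, Finset.mul_sum, map_sum]
    refine Finset.sum_congr rfl fun i _ => ?_
    rw [← gr.ch_comm, ← mul_assoc, gr.La_right]
  refine ⟨fun i => (-1)^m * gr.La (G * gr.ch i), ?_, ?_, ?_, ?_⟩
  · rw [hprod, hLs]
    have := hP 0 m
    rw [Fin.val_zero] at this
    rw [this, hGP, Finset.mul_sum]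
    simp [mul_assoc]
  · intro j
    have := s2 j j.2 le_rfl
    have h2 := hP j.succ m
    rw [Fin.val_succ] at h2
    rw [h2] at this
    have h3 := hGP j.succ (v + m)
    rw [this, map_zero] at h3
    simp only [mul_assoc]
    rw [← Finset.mul_sum, ← h3, mul_zero]
  · set q := gr.ch 0 + ∑ i, gr.io (y i) * gr.ch (Fin.succ i) with hq
    let Ph : ℕ → gr.Om := fun t => if h : t < m then
      ∑ i, gr.io (F i ⟨t, h⟩ - if i = ⟨t, h⟩ then (v + 1) + (t : B) else 0) * gr.ch i.succ else 0
    have e1 : G * q = (-1)^m * (q * lpr Ph m) := by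
      apply sq3
      intro t ht
      have := hP (Fin.succ ⟨t, ht⟩) t
      simp only [Fin.val_succ] at this
      rw [this]
      simp only [Ph, dif_pos ht]
      have := PS_q gr M F y d h0 h1 hyy hdy hFy ⟨t, ht⟩ _ (hvt t)
      rw [this, add_right_comm v 1]
    have e2 : gr.La (G * q) = (-1)^m * cdet F (v+1) := by
      rw [e1, hLs, ← La_cons gr F y (v+1)]
      congr 3
      symm
      apply ofFn_prod_lpr
      intro t; simp [Ph]
    have e3 : gr.La (G * q) = gr.La (G * gr.ch 0) + ∑ i, gr.La (G * gr.ch (Fin.succ i)) * y i := by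
      rw [hq, mul_add, map_add, Finset.mul_sum, map_sum]
      congr 1
      refine Finset.sum_congr rfl fun i _ => ?_
      rw [← gr.ch_comm, ← mul_assoc, gr.La_right]
    simp only [mul_assoc]
    rw [← Finset.mul_sum, ← mul_add, ← e3, e2, ← mul_assoc, ← pow_add, Even.neg_one_pow ⟨m, rfl⟩, one_mul]
  · intro x hx i
    have hc : Commute (gr.io x) G := by
      apply lpr_commute
      intro t ht
      have := hP (Fin.succ ⟨t, ht⟩) t
      simp only [Fin.val_succ] at this
      show gr.io x * P (t+1) t = P (t+1) t * gr.io x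
      rw [this]
      exact PS_io gr M _ _ x (fun i => hx i _) (hvt t x).symm
    have : x * gr.La (G * gr.ch i) = gr.La (G * gr.ch i) * x := by
      rw [← gr.La_left, ← gr.La_right, mul_assoc, gr.ch_comm, ← mul_assoc, hc.eq, mul_assoc]
    have hc2 : Commute x ((-1)^m) := (Commute.one_right x).neg_right.pow_right m
    exact (hc2.mul_right this).eq
end
end

set_option maxHeartbeats 1000000
set_option linter.unusedSectionVars false
set_option linter.unusedSimpArgs false
noncomputable section

abbrev Mt (m n : ℕ) (B : Type) := Matrix (Ind m n) (Ind m n) B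

lemma sum_hat {m n : ℕ} {M : Type} [AddCommMonoid M] (f : Ind (m+1) n → M) :
    ∑ i, f i = f z0 + ∑ a : Ind m n, f (emb a) := by
  rw [Fintype.sum_sum_type, Fintype.sum_sum_type, Fin.sum_univ_succ, add_assoc]; rfl

section
variable {m n : ℕ} {B : Type} [Ring B]

/-- hypotheses on `N` -/
structure NData (N : Matrix (Ind (m+1) n) (Ind (m+1) n) B) (F : Matrix (Ind m n) (Ind m n) B)
    (y d : Ind m n → B) (d0 K : B) : Prop where
  hK : ∀ x, K * x = x * K
  hKd : d0 + ∑ b, d b * y b = K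
  N00 : N z0 z0 = d0
  N0 : ∀ b, N z0 (emb b) = d b
  Na0 : ∀ a, N (emb a) z0 = y a * d0 - ∑ j, F a j * y j
  Nab : ∀ a b, N (emb a) (emb b) = y a * d b + F a b

variable {N : Matrix (Ind (m+1) n) (Ind (m+1) n) B} {F : Matrix (Ind m n) (Ind m n) B}
    {y d : Ind m n → B} {d0 K : B}

/-- row of `(N-u)` applied to a vector -/
lemma NData.row0 (h : NData N F y d d0 K) (u : B) (f : Ind (m+1) n → B) :
    ∑ j, (N - u • (1 : Mt (m+1) n B)) z0 j * f j = (d0 - u) * f z0 + ∑ b, d b * f (emb b) := by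
  rw [sum_hat]
  simp only [Matrix.sub_apply, Matrix.smul_apply, Matrix.one_apply, h.N00, h.N0, smul_eq_mul,
    if_true, (emb_ne_z0 _).symm, if_false, mul_zero, mul_one, sub_zero]

lemma NData.rowa (h : NData N F y d d0 K) (u : B) (a : Ind m n) (f : Ind (m+1) n → B) :
    ∑ j, (N - u • (1 : Mt (m+1) n B)) (emb a) j * f j = (y a * d0 - ∑ j, F a j * y j) * f z0
      + y a * (∑ b, d b * f (emb b)) + ∑ b, F a b * f (emb b) - u * f (emb a) := by
  rw [sum_hat]
  simp only [Matrix.sub_apply, Matrix.smul_apply, Matrix.one_apply, h.Na0, h.Nab, smul_eq_mul,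
    if_true, emb_ne_z0 _, if_false, mul_zero, mul_one, sub_zero, emb_injective.eq_iff, sub_mul, add_mul,
    Finset.sum_add_distrib, Finset.sum_sub_distrib]
  simp only [mul_ite, mul_one, mul_zero, ite_mul, zero_mul, Finset.sum_ite_eq, Finset.mem_univ, if_true,
    Finset.mul_sum, mul_assoc]
  abel

theorem NData.inv (h : NData N F y d d0 K) (u : B) (hu : ∀ x, u * x = x * u)
    (S : Matrix (Ind (m+1) n) (Ind (m+1) n) B)
    (h1 : (N - u • (1 : Mt (m+1) n B)) * S = 1) (h2 : S * (N - u • (1 : Mt (m+1) n B)) = 1) :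
    ∃ (ci : B) (s : Matrix (Ind m n) (Ind m n) B), (K - u) * ci = 1 ∧
      (F - u • (1 : Mt m n B)) * s = 1 ∧ s * (F - u • (1 : Mt m n B)) = 1 ∧
      ∀ a b, S (emb a) (emb b) = s a b + ci * (y a * (- ∑ c, d c * s c b)) := by
  set p : Ind (m+1) n → B := Sum.elim (Fin.cases 1 (fun i => y (Sum.inl i))) (fun i => y (Sum.inr i)) with hp
  have p0 : p z0 = 1 := rfl
  have pa : ∀ a, p (emb a) = y a := by rintro (a | a) <;> rfl
  have hc : ∀ x, (K - u) * x = x * (K - u) := fun x => by rw [sub_mul, mul_sub, h.hK, hu]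
  -- (N-u)p = p c
  have hNp : (N - u • (1 : Mt (m+1) n B)).mulVec p = fun i => p i * (K - u) := by
    funext i
    have hi : i = z0 ∨ ∃ a, i = emb a := by
      rcases i with i | i
      · refine Fin.cases (Or.inl rfl) (fun j => Or.inr ⟨Sum.inl j, rfl⟩) i
      · exact Or.inr ⟨Sum.inr i, rfl⟩
    simp only [Matrix.mulVec, dotProduct]
    rcases hi with rfl | ⟨a, rfl⟩
    · rw [h.row0, p0, one_mul, mul_one, ← h.hKd]; simp only [pa]; abel
    · rw [h.rowa, p0, pa, ← h.hKd]; simp only [pa]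
      rw [mul_one, hu (y a)]; noncomm_ring
  have hSp : ∀ i, p i = (∑ j, S i j * p j) * (K - u) := by
    intro i
    have e : S.mulVec ((N - u • (1 : Mt (m+1) n B)).mulVec p) = p := by
      rw [Matrix.mulVec_mulVec, h2, Matrix.one_mulVec]
    have := congrFun e i
    rw [hNp] at this
    simp only [Matrix.mulVec, dotProduct] at this
    rw [← this, Finset.sum_mul]; simp only [mul_assoc]
  set ci := ∑ j, S z0 j * p j with hci
  have c1 : ci * (K - u) = 1 := (hSp z0).symm
  have c2 : (K - u) * ci = 1 := by rw [hc, c1]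
  have hρ : ∀ i, ∑ j, S i j * p j = p i * ci := by
    intro i
    rw [hSp i, mul_assoc, c2, mul_one]
  have hcic : ∀ x, ci * x = x * ci := by
    intro x
    calc ci * x = ci * (x * (K - u)) * ci := by rw [mul_assoc, mul_assoc, c2, mul_one]
      _ = x * ci := by rw [← hc, ← mul_assoc, c1, one_mul]
  set s : Matrix (Ind m n) (Ind m n) B := Matrix.of fun a b => S (emb a) (emb b) - y a * S z0 (emb b) with hs
  have hsab : ∀ a b, s a b = S (emb a) (emb b) - y a * S z0 (emb b) := fun _ _ => rfl
  have r0 : ∀ b, (d0 - u) * S z0 (emb b) + ∑ c, d c * S (emb c) (emb b) = 0 := by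
    intro b
    rw [← h.row0 u (fun j => S j (emb b)), ← Matrix.mul_apply, h1, Matrix.one_apply_ne (emb_ne_z0 b).symm]
  have ra : ∀ a b, (y a * d0 - ∑ j, F a j * y j) * S z0 (emb b)
      + y a * (∑ c, d c * S (emb c) (emb b)) + ∑ c, F a c * S (emb c) (emb b) - u * S (emb a) (emb b)
      = (1 : Mt m n B) a b := by
    intro a b
    rw [← h.rowa u a (fun j => S j (emb b)), ← Matrix.mul_apply, h1]
    simp [Matrix.one_apply, emb_injective.eq_iff]
  refine ⟨ci, s, c2, ?_, ?_, ?_⟩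
  · ext a b
    rw [sub_mul, Matrix.sub_apply, Matrix.smul_mul, one_mul, Matrix.smul_apply, Matrix.mul_apply, smul_eq_mul,
      ← ra a b]
    simp only [hsab, mul_sub, Finset.sum_sub_distrib, sub_mul, Finset.sum_mul]
    have := r0 b
    have e : ∑ c, d c * S (emb c) (emb b) = u * S z0 (emb b) - d0 * S z0 (emb b) := by
      rw [sub_mul] at this
      rw [← sub_eq_zero, ← this]; abel
    rw [e]
    simp only [← mul_assoc, mul_sub]
    rw [hu (y a)]; abel
  · have col : ∀ i b, (∑ j, S i j * p j) * d b + ∑ c, S i (emb c) * (F - u • (1 : Mt m n B)) c b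
        = (1 : Mt (m+1) n B) i (emb b) := by
      intro i b
      rw [← h2, Matrix.mul_apply, sum_hat (fun j => S i j * p j), sum_hat]
      simp only [Matrix.sub_apply, Matrix.smul_apply, Matrix.one_apply, h.N0, h.Nab, smul_eq_mul,
        (emb_ne_z0 _).symm, if_false, mul_zero, sub_zero, emb_injective.eq_iff, p0, pa, mul_one,
        add_mul, Finset.sum_mul, mul_sub, mul_add, Finset.sum_sub_distrib, Finset.sum_add_distrib]
      simp only [mul_assoc]; abel
    ext a b
    rw [Matrix.mul_apply]
    simp only [hsab, sub_mul, Finset.sum_sub_distrib]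
    have e1 := col (emb a) b
    have e2 := col z0 b
    rw [hρ, pa] at e1
    rw [hρ, p0, one_mul, Matrix.one_apply_ne (emb_ne_z0 b).symm] at e2
    have e3 : (1 : Mt (m+1) n B) (emb a) (emb b) = (1 : Mt m n B) a b := by
      simp [Matrix.one_apply, emb_injective.eq_iff]
    rw [e3] at e1
    rw [← e1]
    have e4 : y a * (ci * d b) + ∑ c, y a * S z0 (emb c) * (F - u • (1 : Mt m n B)) c b = 0 := by
      rw [← mul_zero (y a), ← e2, mul_add, Finset.mul_sum]; simp only [mul_assoc]
    rw [eq_neg_of_add_eq_zero_right e4, mul_assoc]; abel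
  · intro a b
    have e : S z0 (emb b) = ci * (- ∑ c, d c * s c b) := by
      have : (K - u) * S z0 (emb b) = - ∑ c, d c * s c b := by
        have := r0 b
        rw [← h.hKd]
        simp only [hsab, mul_sub, Finset.sum_sub_distrib, ← mul_assoc, ← Finset.sum_mul]
        rw [← sub_eq_zero, ← this]; noncomm_ring
      rw [← this, ← mul_assoc, c1, one_mul]
    rw [hsab, ← mul_assoc, hcic (y a), mul_assoc, ← e]; abel

end
end

set_option maxHeartbeats 1000000
set_option linter.unusedSectionVars false
set_option linter.unusedSimpArgs false
noncomputable section

section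
variable {m n : ℕ} {B : Type} [Ring B]

structure FData (F : Matrix (Ind m n) (Ind m n) B) (y d : Ind m n → B) : Prop where
  hFF : ∀ i j k l, (-1)^((pI i + pI j)*pI k) * (F i j * F k l)
      - (-1)^((pI i+pI j)*pI l) * (F k l * F i j)
    = (-1)^(pI i * pI j) * ((if j = k then F i l else 0) - (if l = i then F k j else 0))
  hFy : ∀ i j a, (-1)^(pI a*pI j) * (F i j * y a) = (-1)^(pI a*pI i) * (y a * F i j)
  hFd : ∀ i j a, (-1)^(pI a*pI j) * (F i j * d a) = (-1)^(pI a*pI i) * (d a * F i j)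
  hyy : ∀ a b, y a * y b = (-1)^(pI a*pI b) * (y b * y a)
  hdy : ∀ a b, d b * y a = (-1)^(pI a * pI b)*(y a * d b) + if a = b then (-1)^pI a else 0

variable {F s : Matrix (Ind m n) (Ind m n) B} {u : B}

lemma comm_inv {R : Type} [Ring R] {L s Z : R} (h1 : L * s = 1) (h2 : s * L = 1) (h : Z * L = L * Z) :
    Z * s = s * Z := by
  calc Z * s = s * (L * Z) * s := by rw [← mul_assoc, h2, one_mul]
    _ = s * Z := by rw [← h, mul_assoc, mul_assoc, h1, mul_one]

lemma neg_pow_comm (k : ℕ) (x : B) : (-1)^k * x = x * (-1)^k :=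
  ((Commute.one_left x).neg_left.pow_left k).eq

lemma s_comm (h1 : (F - u • (1 : Mt m n B)) * s = 1) (h2 : s * (F - u • (1 : Mt m n B)) = 1)
    (hu : ∀ x, u * x = x * u) (p : ℕ) (z : B)
    (h : ∀ i j, (-1)^(p*pI j) * (F i j * z) = (-1)^(p*pI i) * (z * F i j)) (i j : Ind m n) :
    (-1)^(p*pI j) * (s i j * z) = (-1)^(p*pI i) * (z * s i j) := by
  have e := comm_inv (Z := Matrix.diagonal (fun k : Ind m n => (-1)^(p*pI k) * z)) h1 h2 (by
    ext i j
    rw [Matrix.diagonal_mul, Matrix.mul_diagonal, Matrix.sub_apply, Matrix.smul_apply, Matrix.one_apply,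
      mul_sub, sub_mul, mul_assoc, ← h i j, ← mul_assoc (F i j), ← neg_pow_comm, mul_assoc]
    congr 1
    · exact (mul_assoc _ _ _).symm
    · by_cases hij : i = j
      · subst hij; rw [if_pos rfl, smul_eq_mul, mul_one, hu, mul_assoc]
      · simp only [if_neg hij, smul_eq_mul, mul_zero, zero_mul])
  have := congrFun (congrFun e i) j
  rw [Matrix.diagonal_mul, Matrix.mul_diagonal, ← mul_assoc (s i j), ← neg_pow_comm, mul_assoc,
    mul_assoc] at this
  exact this.symm

lemma single_mul_ap (M : Mt m n B) (i j k l : Ind m n) (x : B) :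
    (Matrix.single j i x * M) k l = if j = k then x * M i l else 0 := by
  rw [Matrix.mul_apply, Finset.sum_eq_single i]
  · simp [Matrix.single_apply]
  · intro b _ hb; simp [Matrix.single_apply, hb.symm]
  · simp

lemma mul_single_ap (M : Mt m n B) (i j k l : Ind m n) (x : B) :
    (M * Matrix.single j i x) k l = if l = i then M k j * x else 0 := by
  rw [Matrix.mul_apply, Finset.sum_eq_single j]
  · simp [Matrix.single_apply, eq_comm]
  · intro b _ hb; simp [Matrix.single_apply, hb.symm]
  · simp

lemma uzs (h1 : (F - u • (1 : Mt m n B)) * s = 1) (h2 : s * (F - u • (1 : Mt m n B)) = 1)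
    (hu : ∀ x, u * x = x * u) (Z : Mt m n B) (h : Z * F = F * Z) : Z * s = s * Z := by
  refine comm_inv h1 h2 ?_
  rw [mul_sub, sub_mul, h]
  congr 1
  ext a b
  rw [Matrix.smul_mul, one_mul, Matrix.smul_apply, Matrix.mul_apply, Finset.sum_eq_single b]
  · rw [Matrix.smul_apply, Matrix.one_apply_eq, smul_eq_mul, smul_eq_mul, mul_one, hu]
  · intro c _ hc; rw [Matrix.smul_apply, Matrix.one_apply_ne hc, smul_zero, mul_zero]
  · simp

variable {y d : Ind m n → B}

lemma FData.sF (hF : FData F y d) (h1 : (F - u • (1 : Mt m n B)) * s = 1)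
    (h2 : s * (F - u • (1 : Mt m n B)) = 1)
    (hu : ∀ x, u * x = x * u) (i j k l : Ind m n) :
    (-1)^((pI i + pI j)*pI k) * (F i j * s k l)
      - (-1)^((pI i+pI j)*pI l) * (s k l * F i j)
    = (-1)^(pI i * pI j) * ((if j = k then s i l else 0) - (if l = i then s k j else 0)) := by
  have key : ∀ M : Mt m n B, (Matrix.diagonal (fun k : Ind m n => (-1)^((pI i + pI j)*pI k) * F i j)
      - Matrix.single j i ((-1)^(pI i * pI j))) * M = M * (Matrix.diagonal
        (fun k : Ind m n => (-1)^((pI i + pI j)*pI k) * F i j)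
      - Matrix.single j i ((-1)^(pI i * pI j))) ↔ ∀ k l : Ind m n, (-1)^((pI i + pI j)*pI k) * (F i j * M k l)
      - (-1)^((pI i+pI j)*pI l) * (M k l * F i j)
    = (-1)^(pI i * pI j) * ((if j = k then M i l else 0) - (if l = i then M k j else 0)) := by
    intro M
    rw [← Matrix.ext_iff]
    refine forall_congr' fun k => forall_congr' fun l => ?_
    rw [sub_mul, mul_sub, Matrix.sub_apply, Matrix.sub_apply, Matrix.diagonal_mul, Matrix.mul_diagonal,
      single_mul_ap, mul_single_ap, sub_eq_sub_iff_sub_eq_sub, ← mul_assoc (M k l), ← neg_pow_comm, mul_assoc, mul_assoc,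
      mul_sub]
    simp only [mul_ite, mul_zero, ← neg_pow_comm _ (M k j)]
  have e0 := (key F).2 (fun k l => hF.hFF i j k l)
  have e1 := uzs h1 h2 hu _ e0
  exact (key s).1 e1 k l

/-- consequence for odd k l -/
lemma FData.sFodd (hF : FData F y d) (h1 : (F - u • (1 : Mt m n B)) * s = 1)
    (h2 : s * (F - u • (1 : Mt m n B)) = 1)
    (hu : ∀ x, u * x = x * u) (i j : Ind m n) (k l : Fin n) :
    F i j * s (Sum.inr k) (Sum.inr l) = s (Sum.inr k) (Sum.inr l) * F i j
      - (if j = Sum.inr k then s i (Sum.inr l) else 0) + (if i = Sum.inr l then s (Sum.inr k) j else 0) := by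
  have := hF.sF h1 h2 hu i j (Sum.inr k) (Sum.inr l)
  have hq : (if Sum.inr l = i then s (Sum.inr k) j else 0) = (if i = Sum.inr l then s (Sum.inr k) j else 0) := by
    by_cases h : i = Sum.inr l
    · rw [if_pos h, if_pos h.symm]
    · rw [if_neg h, if_neg (fun h' => h h'.symm)]
  rw [hq] at this
  clear hq
  generalize hp : (if j = Sum.inr k then s i (Sum.inr l) else 0) = p at *
  generalize hq : (if i = Sum.inr l then s (Sum.inr k) j else 0) = q at *
  generalize s (Sum.inr k) (Sum.inr l) = z at *
  have aux : F i j * z - z * F i j = - (p - q) → F i j * z = z * F i j - p + q := by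
    intro h; rw [sub_eq_iff_eq_add.1 h]; abel
  apply aux
  rcases i with i | i <;> rcases j with j | j
  · rw [if_neg (by simp)] at hp hq
    subst hp hq
    simp [pI] at this ⊢
    exact this
  · simp [pI] at this ⊢
    rw [← neg_sub p q, ← this]; abel
  · simp [pI] at this ⊢
    rw [← neg_sub p q, ← this]; abel
  · simp [pI] at this ⊢
    rw [this]

lemma FData.sy (hF : FData F y d) (h1 : (F - u • (1 : Mt m n B)) * s = 1)
    (h2 : s * (F - u • (1 : Mt m n B)) = 1)
    (hu : ∀ x, u * x = x * u) (c : Ind m n) (a k : Fin n) :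
    s c (Sum.inr k) * y (Sum.inr a) = - ((-1)^(pI c) * (y (Sum.inr a) * s c (Sum.inr k))) := by
  have := s_comm h1 h2 hu _ _ (fun i j => hF.hFy i j (Sum.inr a)) c (Sum.inr k)
  rcases c with c | c <;> simp [pI] at this ⊢
  · rw [← this]; simp
  · exact this

lemma FData.sd (hF : FData F y d) (h1 : (F - u • (1 : Mt m n B)) * s = 1)
    (h2 : s * (F - u • (1 : Mt m n B)) = 1)
    (hu : ∀ x, u * x = x * u) (c : Ind m n) (a k : Fin n) :
    s (Sum.inr a) (Sum.inr k) * d c = d c * s (Sum.inr a) (Sum.inr k) := by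
  have := s_comm h1 h2 hu _ _ (fun i j => hF.hFd i j c) (Sum.inr a) (Sum.inr k)
  rcases c with c | c <;> simp [pI] at this ⊢
  · exact this
  · exact this
end
end

set_option maxHeartbeats 1000000
set_option linter.unusedSectionVars false
set_option linter.unusedSimpArgs false
noncomputable section

section
variable {m n : ℕ} {B : Type} [Ring B]

def th (gr : Grass B n) (s : Mt m n B) (a : Ind m n) : gr.Om := ∑ k : Fin n, gr.io (s a (Sum.inr k)) * gr.ch k

def chi (gr : Grass B n) : Ind m n → gr.Om := Sum.elim (fun _ => 0) gr.ch

variable {F s s' : Mt m n B} {y d : Ind m n → B} {u u' : B} (gr : Grass B n)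

lemma one_row (gr : Grass B n) (i : Ind m n) :
    ∑ k : Fin n, gr.io ((1 : Mt m n B) i (Sum.inr k)) * gr.ch k = chi gr i := by
  rcases i with i | i
  · simp [chi, Matrix.one_apply]
  · simp [chi, Matrix.one_apply, apply_ite gr.io, ite_mul]

lemma th_mul (gr : Grass B n) (L s : Mt m n B) (i : Ind m n) :
    ∑ k : Fin n, gr.io ((L * s) i (Sum.inr k)) * gr.ch k = ∑ a, gr.io (L i a) * th gr s a := by
  simp only [Matrix.mul_apply, th, map_sum, map_mul, Finset.sum_mul, Finset.mul_sum, mul_assoc]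
  exact Finset.sum_comm

lemma th_L (gr : Grass B n) (h1 : (F - u • (1 : Mt m n B)) * s = 1) (i : Ind m n) :
    ∑ a, gr.io ((F - u • (1 : Mt m n B)) i a) * th gr s a = chi gr i := by
  rw [← th_mul, h1, one_row]

lemma sum_sub_smul (gr : Grass B n) (F : Mt m n B) (u : B) (i : Ind m n) (f : Ind m n → gr.Om) :
    ∑ a, gr.io ((F - u • (1 : Mt m n B)) i a) * f a = ∑ a, gr.io (F i a) * f a - gr.io u * f i := by
  have : ∀ a, gr.io ((F - u • (1 : Mt m n B)) i a) * f a = gr.io (F i a) * f a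
      - if i = a then gr.io u * f a else 0 := by
    intro a
    rw [Matrix.sub_apply, Matrix.smul_apply, Matrix.one_apply, map_sub, sub_mul]
    by_cases h : i = a
    · rw [if_pos h, if_pos h, smul_eq_mul, mul_one]
    · rw [if_neg h, if_neg h, smul_zero, map_zero, zero_mul]
  simp only [this]
  rw [Finset.sum_sub_distrib, Finset.sum_ite_eq, if_pos (Finset.mem_univ _)]

lemma th_F (gr : Grass B n) (h1 : (F - u • (1 : Mt m n B)) * s = 1) (i : Ind m n) :
    ∑ a, gr.io (F i a) * th gr s a = gr.io u * th gr s i + chi gr i := by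
  have := th_L gr h1 i
  rw [sum_sub_smul, sub_eq_iff_eq_add] at this
  rw [this, add_comm]

lemma chi_io (gr : Grass B n) (i : Ind m n) (b : B) : chi gr i * gr.io b = gr.io b * chi gr i := by
  rcases i with i | i
  · simp [chi]
  · exact gr.ch_comm i b

lemma chi_ch (gr : Grass B n) (i : Ind m n) (k : Fin n) : chi gr i * gr.ch k = -(gr.ch k * chi gr i) := by
  rcases i with i | i
  · simp [chi]
  · exact gr.ch_anti i k

lemma chi_th (gr : Grass B n) (i a : Ind m n) (s : Mt m n B) :
    chi gr i * th gr s a = - (th gr s a * chi gr i) := by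
  simp only [th, Finset.mul_sum, Finset.sum_mul, ← Finset.sum_neg_distrib]
  refine Finset.sum_congr rfl fun k _ => ?_
  rw [← mul_assoc, chi_io, mul_assoc, chi_ch, mul_neg, mul_assoc]

lemma io_sum_ite (gr : Grass B n) (s : Mt m n B) (i j : Ind m n) (k : Fin n) :
    ∑ l : Fin n, gr.io (if i = Sum.inr l then s (Sum.inr k) j else 0) * gr.ch l
      = gr.io (s (Sum.inr k) j) * chi gr i := by
  rcases i with i | i
  · simp [chi]
  · simp [chi, apply_ite gr.io, ite_mul]

lemma F_th (hF : FData F y d) (h1 : (F - u • (1 : Mt m n B)) * s = 1)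
    (h2 : s * (F - u • (1 : Mt m n B)) = 1) (hu : ∀ x, u * x = x * u) (i j : Ind m n) (k : Fin n) :
    gr.io (F i j) * th gr s (Sum.inr k) = th gr s (Sum.inr k) * gr.io (F i j)
      - (if j = Sum.inr k then th gr s i else 0) + gr.io (s (Sum.inr k) j) * chi gr i := by
  rw [← io_sum_ite]
  have : (if j = Sum.inr k then th gr s i else 0) = ∑ l : Fin n, gr.io (if j = Sum.inr k then s i (Sum.inr l) else 0) * gr.ch l := by
    split_ifs
    · rfl
    · simp
  rw [this]
  simp only [th]
  rw [Finset.mul_sum, Finset.sum_mul, ← Finset.sum_sub_distrib, ← Finset.sum_add_distrib]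
  refine Finset.sum_congr rfl fun l _ => ?_
  rw [← mul_assoc, ← map_mul, hF.sFodd h1 h2 hu, map_add, map_sub, add_mul, sub_mul, map_mul, mul_assoc,
    mul_assoc, gr.ch_comm]

lemma s_res (h2 : s * (F - u • (1 : Mt m n B)) = 1) (h1' : (F - u' • (1 : Mt m n B)) * s' = 1)
    (huu : u' + 1 = u) : s * s' = s - s' := by
  have e : (F - u' • (1 : Mt m n B)) = (F - u • (1 : Mt m n B)) + 1 := by
    rw [← huu, add_smul, one_smul]; abel
  have : s * ((F - u' • (1 : Mt m n B)) * s') = s := by rw [h1', mul_one]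
  rw [e, ← mul_assoc, mul_add, h2, add_mul, one_mul, mul_one] at this
  rw [eq_sub_iff_add_eq, add_comm]; exact this

lemma Q_zero (hF : FData F y d) (h1 : (F - u • (1 : Mt m n B)) * s = 1)
    (h2 : s * (F - u • (1 : Mt m n B)) = 1) (h1' : (F - u' • (1 : Mt m n B)) * s' = 1)
    (h2' : s' * (F - u' • (1 : Mt m n B)) = 1)
    (hu : ∀ x, u * x = x * u) (huu : u' + 1 = u) (j : Ind m n) (k : Fin n) :
    th gr s j * th gr s' (Sum.inr k) = - (th gr s (Sum.inr k) * th gr s' j) := by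
  have hu' : ∀ x, u' * x = x * u' := fun x => by
    rw [eq_sub_of_add_eq huu, sub_mul, mul_sub, hu, one_mul, mul_one]
  set b : Ind m n := Sum.inr k with hb
  set Q : Ind m n → gr.Om := fun a => th gr s a * th gr s' b + th gr s b * th gr s' a with hQ
  have ss : ∑ a, gr.io (s b a) * th gr s' a = th gr s b - th gr s' b := by
    rw [← th_mul, s_res h2 h1' huu]
    simp only [th, ← Finset.sum_sub_distrib, Matrix.sub_apply, map_sub, sub_mul]
  have hth_u : ∀ s : Mt m n B, ∀ a, th gr s a * gr.io u' = gr.io u' * th gr s a := by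
    intro s a
    simp only [th, Finset.mul_sum, Finset.sum_mul]
    refine Finset.sum_congr rfl fun l _ => ?_
    rw [mul_assoc, gr.ch_comm, ← mul_assoc, ← mul_assoc, ← map_mul, ← map_mul, hu']
  have h0 : ∀ i, ∑ a, gr.io (F i a) * Q a = gr.io u' * Q i := by
    intro i
    have e : ∀ a, gr.io (F i a) * Q a = (gr.io (F i a) * th gr s a) * th gr s' b
        + th gr s b * (gr.io (F i a) * th gr s' a) - (if a = b then th gr s i * th gr s' a else 0)
        - (gr.io (s b a) * th gr s' a) * chi gr i := by
      intro a
      simp only [hQ]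
      rw [mul_add, ← mul_assoc, ← mul_assoc, F_th gr hF h1 h2 hu, add_mul, sub_mul, ite_mul, zero_mul]
      rw [mul_assoc (gr.io (s (Sum.inr k) a)), chi_th]
      noncomm_ring
    simp only [e]
    rw [Finset.sum_sub_distrib, Finset.sum_sub_distrib, Finset.sum_add_distrib, ← Finset.sum_mul,
      ← Finset.mul_sum, ← Finset.sum_mul, Finset.sum_ite_eq', if_pos (Finset.mem_univ _), th_F gr h1, th_F gr h1', ss]
    have hc := chi_th gr i b s'
    have hw := hth_u s b
    have hui : gr.io u = gr.io u' + 1 := by rw [← huu, map_add, map_one]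
    rw [hui, add_mul _ (chi gr i), hc, mul_add (th gr s b), ← mul_assoc (th gr s b), hw]
    simp only [hQ]
    noncomm_ring
  have h3 : ∀ i, ∑ a, gr.io ((F - u' • (1 : Mt m n B)) i a) * Q a = 0 := by
    intro i; rw [sum_sub_smul, h0, sub_self]
  have h4 : Q j = 0 := by
    have e : ∑ i, gr.io (s' j i) * ∑ a, gr.io ((F - u' • (1 : Mt m n B)) i a) * Q a
        = ∑ a, gr.io ((s' * (F - u' • (1 : Mt m n B))) j a) * Q a := by
      simp only [Matrix.mul_apply, map_sum, map_mul, Finset.mul_sum, Finset.sum_mul, mul_assoc]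
      exact Finset.sum_comm
    simp only [h3, mul_zero, Finset.sum_const_zero, h2'] at e
    rw [Finset.sum_eq_single j] at e
    · rw [Matrix.one_apply_eq, map_one, one_mul] at e; exact e.symm
    · intro a _ ha; rw [Matrix.one_apply_ne ha.symm, map_zero, zero_mul]
    · simp
  exact eq_neg_of_add_eq_zero_left h4

def eta (gr : Grass B n) (d : Ind m n → B) (s : Mt m n B) : gr.Om := - ∑ c, gr.io (d c) * th gr s c

lemma th_d (hF : FData F y d) (h1 : (F - u • (1 : Mt m n B)) * s = 1)
    (h2 : s * (F - u • (1 : Mt m n B)) = 1) (hu : ∀ x, u * x = x * u) (c : Ind m n) (a : Fin n) :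
    th gr s (Sum.inr a) * gr.io (d c) = gr.io (d c) * th gr s (Sum.inr a) := by
  simp only [th, Finset.mul_sum, Finset.sum_mul]
  refine Finset.sum_congr rfl fun l _ => ?_
  rw [mul_assoc, gr.ch_comm, ← mul_assoc, ← mul_assoc, ← map_mul, ← map_mul, hF.sd h1 h2 hu]

lemma th_y (hF : FData F y d) (h1 : (F - u • (1 : Mt m n B)) * s = 1)
    (h2 : s * (F - u • (1 : Mt m n B)) = 1) (hu : ∀ x, u * x = x * u) (c : Ind m n) (a : Fin n) :
    th gr s c * gr.io (y (Sum.inr a)) = - ((-1)^(pI c) * (gr.io (y (Sum.inr a)) * th gr s c)) := by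
  simp only [th, Finset.mul_sum, Finset.sum_mul, ← Finset.sum_neg_distrib]
  refine Finset.sum_congr rfl fun l _ => ?_
  rw [mul_assoc, gr.ch_comm, ← mul_assoc, ← map_mul, hF.sy h1 h2 hu]
  simp [mul_assoc]

lemma th_eta (hF : FData F y d) (h1 : (F - u • (1 : Mt m n B)) * s = 1)
    (h2 : s * (F - u • (1 : Mt m n B)) = 1) (h1' : (F - u' • (1 : Mt m n B)) * s' = 1)
    (h2' : s' * (F - u' • (1 : Mt m n B)) = 1)
    (hu : ∀ x, u * x = x * u) (huu : u' + 1 = u) (k : Fin n) :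
    th gr s (Sum.inr k) * eta gr d s' = - (eta gr d s * th gr s' (Sum.inr k)) := by
  simp only [eta, mul_neg, neg_mul, neg_neg, Finset.mul_sum, Finset.sum_mul, ← Finset.sum_neg_distrib]
  refine Finset.sum_congr rfl fun c _ => ?_
  rw [← mul_assoc, th_d gr hF h1 h2 hu, mul_assoc, mul_assoc, Q_zero gr hF h1 h2 h1' h2' hu huu, mul_neg]

lemma eta_y (hF : FData F y d) (h1 : (F - u • (1 : Mt m n B)) * s = 1)
    (h2 : s * (F - u • (1 : Mt m n B)) = 1) (hu : ∀ x, u * x = x * u) (a : Fin n) :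
    eta gr d s * gr.io (y (Sum.inr a)) = - (gr.io (y (Sum.inr a)) * eta gr d s) + th gr s (Sum.inr a) := by
  have e : ∀ c : Ind m n, gr.io (d c) * th gr s c * gr.io (y (Sum.inr a))
      = - (gr.io (y (Sum.inr a)) * (gr.io (d c) * th gr s c)) - if c = Sum.inr a then th gr s c else 0 := by
    intro c
    rw [mul_assoc, th_y gr hF h1 h2 hu]
    have hd := hF.hdy (Sum.inr a) c
    have hd' : gr.io (d c) * gr.io (y (Sum.inr a)) = (-1)^(pI c) * (gr.io (y (Sum.inr a)) * gr.io (d c))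
        - if c = Sum.inr a then 1 else 0 := by
      rw [← map_mul, hd]
      rcases c with c | c
      · simp [pI]
      · by_cases h : a = c
        · subst h; simp [pI, sub_eq_add_neg]
        · simp [pI, h, Ne.symm h]
    rw [mul_neg, neg_pow_comm, ← mul_assoc, ← mul_assoc, hd', sub_mul, ite_mul, one_mul, zero_mul]
    rcases c with c | c
    · simp [pI, mul_assoc]
    · by_cases h : c = a
      · subst h; simp [pI, mul_assoc]; abel
      · simp [pI, h, mul_assoc]
  simp only [eta, neg_mul, mul_neg, Finset.sum_mul, e, Finset.sum_sub_distrib, Finset.sum_neg_distrib,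
    ← Finset.mul_sum, Finset.sum_ite_eq', Finset.mem_univ, if_true]
  abel
end
end

set_option maxHeartbeats 1000000
set_option linter.unusedSectionVars false
set_option linter.unusedSimpArgs false
noncomputable section

section
variable {m n : ℕ} {B : Type} [Ring B]

def rdet (S : Fin n → Mt m n B) : B := ∑ τ : Equiv.Perm (Fin n), ((Equiv.Perm.sign τ : ℤˣ) : ℤ) •
      (List.ofFn fun t : Fin n => S t (Sum.inr t) (Sum.inr (τ t))).prod

variable {N : Mt (m+1) n B} {F : Mt m n B} {y d : Ind m n → B} {d0 K : B}

def pp (y : Ind m n → B) : Ind (m+1) n → B :=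
  Sum.elim (Fin.cases 1 (fun i => y (Sum.inl i))) (fun i => y (Sum.inr i))

lemma pp_emb (y : Ind m n → B) (a : Ind m n) : pp y (emb a) = y a := by
  rcases a with a | a <;> rfl

lemma NData.Np (h : NData N F y d d0 K) (u : B) (hu : ∀ x, u * x = x * u) (i : Ind (m+1) n) :
    ∑ j, (N - u • (1 : Mt (m+1) n B)) i j * pp y j = pp y i * (K - u) := by
  have p0 : pp y (z0 : Ind (m+1) n) = 1 := rfl
  have hi : i = z0 ∨ ∃ a, i = emb a := by
    rcases i with i | i
    · refine Fin.cases (Or.inl rfl) (fun j => Or.inr ⟨Sum.inl j, rfl⟩) i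
    · exact Or.inr ⟨Sum.inr i, rfl⟩
  rcases hi with rfl | ⟨a, rfl⟩
  · rw [h.row0, p0, one_mul, mul_one, ← h.hKd]; simp only [pp_emb]; abel
  · rw [h.rowa, p0, pp_emb, ← h.hKd]; simp only [pp_emb]
    rw [mul_one, hu (y a)]; noncomm_ring

lemma NData.Ns (h : NData N F y d d0 K) (u : B) (s : Mt m n B)
    (h1 : (F - u • (1 : Mt m n B)) * s = 1) (k : Fin n) (f : Ind (m+1) n → B) (f0 : f z0 = 0)
    (fa : ∀ a, f (emb a) = s a (Sum.inr k)) (i : Fin (m+1)) :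
    ∑ j, (N - u • (1 : Mt (m+1) n B)) (Sum.inl i) j * f j = pp y (Sum.inl i) * ∑ c, d c * s c (Sum.inr k) := by
  refine Fin.cases ?_ (fun a => ?_) i
  · have := h.row0 u f
    rw [f0, mul_zero, zero_add] at this
    simp only [fa] at this
    rw [show pp y (Sum.inl 0 : Ind (m+1) n) = 1 from rfl, one_mul]
    exact this
  · have := h.rowa u (Sum.inl a) f
    rw [f0, mul_zero, zero_add] at this
    simp only [fa] at this
    have e := congrFun (congrFun h1 (Sum.inl a)) (Sum.inr k)
    rw [sub_mul, Matrix.sub_apply, Matrix.smul_mul, one_mul, Matrix.smul_apply, smul_eq_mul,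
      Matrix.one_apply_ne (by simp), Matrix.mul_apply] at e
    rw [add_sub_assoc, e, add_zero] at this
    exact this

section facts
lemma core_facts [Algebra ℂ B] (hF : FData F y d) (hN : NData N F y d d0 K) (v : B) (hv : ∀ x, v * x = x * v)
  (hMM : ∀ k i l j : Fin (m+1), N (Sum.inl k) (Sum.inl i) * N (Sum.inl l) (Sum.inl j)
      - N (Sum.inl l) (Sum.inl j) * N (Sum.inl k) (Sum.inl i)
      = (if i = l then N (Sum.inl k) (Sum.inl j) else 0) - (if j = k then N (Sum.inl l) (Sum.inl i) else 0)) :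
  ∃ (γ : Fin n → B) (γ0 δ : B), γ0 = cdet (fun i j => N (Sum.inl i) (Sum.inl j)) v ∧
    δ = cdet (fun i j => F (Sum.inl i) (Sum.inl j)) (v+1) ∧
    γ0 + ∑ b, γ b * y (Sum.inr b) = δ * (K - (v + (m:B))) ∧
    (∀ s : Mt m n B, (F - (v + (m:B)) • (1 : Mt m n B)) * s = 1 → ∀ k,
      ∑ b, γ b * s (Sum.inr b) (Sum.inr k) = δ * ∑ c, d c * s c (Sum.inr k)) ∧
    (∀ a b, γ b * y (Sum.inr a) = -(y (Sum.inr a) * γ b) - if a = b then δ else 0) ∧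
    (∀ a, δ * y (Sum.inr a) = y (Sum.inr a) * δ) := by
  obtain ⟨g, g1, g2, g3, g4⟩ := evenSector m (fun i j => N (Sum.inl i) (Sum.inl j))
    (fun i j => F (Sum.inl i) (Sum.inl j)) (fun i => y (Sum.inl i)) (fun i => d (Sum.inl i)) v hv hMM
    (fun j => hN.N0 (Sum.inl j)) (fun i j => hN.Nab (Sum.inl i) (Sum.inl j))
    (fun i j => by have := hF.hyy (Sum.inl i) (Sum.inl j); simpa [pI] using this)
    (fun i j => by have := hF.hdy (Sum.inl i) (Sum.inl j); simpa [pI] using this)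
    (fun i j k => by have := hF.hFy (Sum.inl i) (Sum.inl j) (Sum.inl k); simpa [pI] using this)
  set w : B := v + (m : B) with hw
  have hwc : ∀ x, w * x = x * w := fun x => by rw [hw, add_mul, mul_add, hv, (Nat.cast_commute m x).eq]
  set δ := cdet (fun i j => F (Sum.inl i) (Sum.inl j)) (v+1) with hδ
  set γ0 := cdet (fun i j => N (Sum.inl i) (Sum.inl j)) v with hγ0
  have hδp : ∑ i, g i * pp y (Sum.inl i) = δ := by
    rw [Fin.sum_univ_succ, ← g3]; congr 1; exact mul_one _
  have gen : ∀ f : Ind (m+1) n → B, ∑ i, g i * ∑ j, (N - w • (1 : Mt (m+1) n B)) (Sum.inl i) j * f j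
      = γ0 * f z0 + ∑ b, (∑ i, g i * N (Sum.inl i) (Sum.inr b)) * f (Sum.inr b) := by
    intro f
    have e1 : ∀ i j : Fin (m+1), (N - w • (1 : Mt (m+1) n B)) (Sum.inl i) (Sum.inl j)
        = N (Sum.inl i) (Sum.inl j) - if i = j then w else 0 := by
      intro i j
      rw [Matrix.sub_apply, Matrix.smul_apply, Matrix.one_apply, smul_eq_mul, mul_ite, mul_one, mul_zero]
      simp
    have e2 : ∀ (i : Fin (m+1)) (b : Fin n), (N - w • (1 : Mt (m+1) n B)) (Sum.inl i) (Sum.inr b)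
        = N (Sum.inl i) (Sum.inr b) := by
      intro i b
      rw [Matrix.sub_apply, Matrix.smul_apply, Matrix.one_apply_ne (by simp), smul_zero, sub_zero]
    have e3 : ∀ i, ∑ j, (N - w • (1 : Mt (m+1) n B)) (Sum.inl i) j * f j
        = (N (Sum.inl i) (Sum.inl 0) - if i = 0 then w else 0) * f z0
        + (∑ j : Fin m, (N (Sum.inl i) (Sum.inl j.succ) - if i = j.succ then w else 0) * f (Sum.inl j.succ)
        + ∑ b, N (Sum.inl i) (Sum.inr b) * f (Sum.inr b)) := by
      intro i
      rw [Fintype.sum_sum_type, Fin.sum_univ_succ, add_assoc]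
      simp only [e1, e2]; rfl
    simp only [e3, mul_add, Finset.sum_add_distrib, ← mul_assoc]
    rw [← Finset.sum_mul, g1]
    have e4 : ∑ i, g i * ∑ j : Fin m, (N (Sum.inl i) (Sum.inl j.succ) - if i = j.succ then w else 0) * f (Sum.inl j.succ) = 0 := by
      simp only [Finset.mul_sum, ← mul_assoc]
      rw [Finset.sum_comm]
      refine Finset.sum_eq_zero fun j _ => ?_
      rw [← Finset.sum_mul, g2, zero_mul]
    rw [e4, zero_add]
    congr 1
    simp only [Finset.mul_sum, Finset.sum_mul, ← mul_assoc]
    exact Finset.sum_comm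
  have hdy1 : ∀ (a : Fin n) (j : Fin m), d (Sum.inl j) * y (Sum.inr a) = y (Sum.inr a) * d (Sum.inl j) := by
    intro a j
    have := hF.hdy (Sum.inr a) (Sum.inl j); simpa [pI] using this
  have hdy2 : ∀ (a b : Fin n), d (Sum.inr b) * y (Sum.inr a) = - (y (Sum.inr a) * d (Sum.inr b)) - if a = b then 1 else 0 := by
    intro a b
    have := hF.hdy (Sum.inr a) (Sum.inr b)
    rw [this]
    by_cases h : a = b
    · subst h; simp [pI, sub_eq_add_neg]
    · simp [pI, h]
  have hyy1 : ∀ (a : Fin n) (j : Fin m), y (Sum.inl j) * y (Sum.inr a) = y (Sum.inr a) * y (Sum.inl j) := by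
    intro a j
    have := hF.hyy (Sum.inl j) (Sum.inr a); simpa [pI] using this
  have hFy1 : ∀ (a : Fin n) (i j : Fin m), F (Sum.inl i) (Sum.inl j) * y (Sum.inr a) = y (Sum.inr a) * F (Sum.inl i) (Sum.inl j) := by
    intro a i j
    have := hF.hFy (Sum.inl i) (Sum.inl j) (Sum.inr a); simpa [pI] using this
  have hFy2 : ∀ (a b : Fin n) (i : Fin m), F (Sum.inl i) (Sum.inr b) * y (Sum.inr a) = -(y (Sum.inr a) * F (Sum.inl i) (Sum.inr b)) := by
    intro a b i
    have := hF.hFy (Sum.inl i) (Sum.inr b) (Sum.inr a)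
    simp [pI] at this
    rw [← this, neg_neg]
  have hyp : ∀ (a : Fin n) (i : Fin (m+1)), pp y (Sum.inl i) * y (Sum.inr a) = y (Sum.inr a) * pp y (Sum.inl i) := by
    intro a i
    refine Fin.cases ?_ (fun i => ?_) i
    · rw [show pp y (Sum.inl 0 : Ind (m+1) n) = 1 from rfl, one_mul, mul_one]
    · exact hyy1 a i
  have hgy : ∀ (a : Fin n) i, y (Sum.inr a) * g i = g i * y (Sum.inr a) := by
    intro a
    apply g4
    intro i j
    refine Fin.cases ?_ (fun i => ?_) i
    · have := hN.N0 (Sum.inl j)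
      change N (Sum.inl 0) (Sum.inl j.succ) = _ at this
      rw [this, hdy1]
    · have := hN.Nab (Sum.inl i) (Sum.inl j)
      change N (Sum.inl i.succ) (Sum.inl j.succ) = _ at this
      rw [this, mul_add, add_mul, hFy1, mul_assoc (y (Sum.inl i)), hdy1, ← mul_assoc, ← mul_assoc, hyy1]
  refine ⟨fun b => ∑ i, g i * N (Sum.inl i) (Sum.inr b), γ0, δ, rfl, rfl, ?_, ?_, ?_, ?_⟩
  · have := gen (pp y)
    simp only [hN.Np w hwc] at this
    rw [show pp y (z0 : Ind (m+1) n) = 1 from rfl, mul_one] at this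
    rw [← hδp, Finset.sum_mul]
    simp only [← mul_assoc] at this
    exact this.symm
  · intro s hs k
    set f : Ind (m+1) n → B := Sum.elim (Fin.cases 0 (fun i => s (Sum.inl i) (Sum.inr k))) (fun i => s (Sum.inr i) (Sum.inr k)) with hf
    have fa : ∀ a, f (emb a) = s a (Sum.inr k) := by rintro (a | a) <;> rfl
    have f0 : f z0 = 0 := rfl
    have := gen f
    simp only [hN.Ns w s hs k f f0 fa, ← mul_assoc] at this
    rw [f0, mul_zero, zero_add, ← Finset.sum_mul, hδp] at this
    exact this.symm
  · intro a b
    have e : ∀ i : Fin (m+1), N (Sum.inl i) (Sum.inr b) * y (Sum.inr a)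
        = -(y (Sum.inr a) * N (Sum.inl i) (Sum.inr b)) - if a = b then pp y (Sum.inl i) else 0 := by
      intro i
      refine Fin.cases ?_ (fun i => ?_) i
      · have := hN.N0 (Sum.inr b)
        change N (Sum.inl 0) (Sum.inr b) = _ at this
        rw [this, hdy2]; rfl
      · have := hN.Nab (Sum.inl i) (Sum.inr b)
        change N (Sum.inl i.succ) (Sum.inr b) = _ at this
        rw [this, add_mul, mul_assoc, hdy2, hFy2, mul_sub, mul_neg, ← mul_assoc, hyy1, mul_add, ← mul_assoc,
          mul_ite, mul_one, mul_zero]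
        change _ = _ - if a = b then y (Sum.inl i) else 0
        abel
    have e' : ∀ i : Fin (m+1), g i * N (Sum.inl i) (Sum.inr b) * y (Sum.inr a)
        = -(y (Sum.inr a) * (g i * N (Sum.inl i) (Sum.inr b))) - if a = b then g i * pp y (Sum.inl i) else 0 := by
      intro i
      rw [mul_assoc, e, mul_sub, mul_neg, ← mul_assoc, ← hgy, mul_assoc, mul_ite, mul_zero]
    simp only [Finset.sum_mul, e']
    rw [Finset.sum_sub_distrib, Finset.sum_neg_distrib, ← Finset.mul_sum]
    congr 1
    by_cases h : a = b
    · simp only [if_pos h]; exact hδp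
    · simp only [if_neg h, Finset.sum_const_zero]
  · intro a
    rw [← hδp, Finset.sum_mul, Finset.mul_sum]
    refine Finset.sum_congr rfl fun i _ => ?_
    rw [mul_assoc, hyp, ← mul_assoc, ← hgy, mul_assoc]

lemma core_main [Algebra ℂ B] (hF : FData F y d) (hN : NData N F y d d0 K) (v : B) (hv : ∀ x, v * x = x * v)
  (hMM : ∀ k i l j : Fin (m+1), N (Sum.inl k) (Sum.inl i) * N (Sum.inl l) (Sum.inl j)
      - N (Sum.inl l) (Sum.inl j) * N (Sum.inl k) (Sum.inl i)
      = (if i = l then N (Sum.inl k) (Sum.inl j) else 0) - (if j = k then N (Sum.inl l) (Sum.inl i) else 0))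
  (S : Fin n → Mt (m+1) n B)
  (hS1 : ∀ t : Fin n, (N - (v + (m:B) - ((t:ℕ):B)) • (1 : Mt (m+1) n B)) * S t = 1)
  (hS2 : ∀ t : Fin n, S t * (N - (v + (m:B) - ((t:ℕ):B)) • (1 : Mt (m+1) n B)) = 1) :
  ∃ s : Fin n → Mt m n B, (∀ t : Fin n, (F - (v + (m:B) - ((t:ℕ):B)) • (1 : Mt m n B)) * s t = 1) ∧
    (∀ t : Fin n, s t * (F - (v + (m:B) - ((t:ℕ):B)) • (1 : Mt m n B)) = 1) ∧
    cdet (fun i j => N (Sum.inl i) (Sum.inl j)) v * rdet S =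
      (K - (v + (m:B)) + (n:B)) * (cdet (fun i j => F (Sum.inl i) (Sum.inl j)) (v+1) * rdet s) := by
  have hu : ∀ (t : ℕ) x, (v + (m:B) - (t:B)) * x = x * (v + (m:B) - (t:B)) := fun t x => by
    rw [sub_mul, add_mul, mul_sub, mul_add, hv, (Nat.cast_commute m x).eq, (Nat.cast_commute t x).eq]
  have hw : ∀ x, (v + (m:B)) * x = x * (v + (m:B)) := fun x => by
    rw [add_mul, mul_add, hv, (Nat.cast_commute m x).eq]
  choose ci s hci hs1 hs2 hSs using fun t : Fin n => hN.inv (v + (m:B) - ((t:ℕ):B)) (hu t) (S t) (hS1 t) (hS2 t)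
  refine ⟨s, hs1, hs2, ?_⟩
  obtain ⟨γ, γ0, δ, e0, eδ, f1, f2, f3, f4⟩ := core_facts hF hN v hv hMM
  rw [← e0, ← eδ]
  have hcc : ∀ x, (K - (v + (m:B))) * x = x * (K - (v + (m:B))) := fun x => by
    rw [sub_mul, mul_sub, hN.hK, hw]
  set gr := grass B n
  have hSrow : ∀ t : Fin n, ∑ k, gr.io (S t (Sum.inr t) (Sum.inr k)) * gr.ch k
      = th gr (s t) (Sum.inr t) + gr.io (ci t) * (gr.io (y (Sum.inr t)) * eta gr d (s t)) := by
    intro t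
    have e : ∀ k : Fin n, S t (Sum.inr t) (Sum.inr k) = s t (Sum.inr t) (Sum.inr k)
      + ci t * (y (Sum.inr t) * (- ∑ c, d c * s t c (Sum.inr k))) := fun k => hSs t (Sum.inr t) (Sum.inr k)
    have e2 : eta gr d (s t) = ∑ k, gr.io (- ∑ c, d c * s t c (Sum.inr k)) * gr.ch k := by
      simp only [eta, th, Finset.mul_sum, map_neg, map_sum, map_mul, Finset.sum_mul, neg_mul,
        Finset.sum_neg_distrib, mul_assoc]
      rw [Finset.sum_comm]
    rw [e2, th, Finset.mul_sum, Finset.mul_sum, ← Finset.sum_add_distrib]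
    refine Finset.sum_congr rfl fun k _ => ?_
    rw [e, map_add, add_mul, map_mul, map_mul, mul_assoc, mul_assoc]
  have hyO : ∀ a b : Fin n, y (Sum.inr a) * y (Sum.inr b) = -(y (Sum.inr b) * y (Sum.inr a)) := by
    intro a b
    have := hF.hyy (Sum.inr a) (Sum.inr b); simpa [pI] using this
  have hsucc : ∀ t : ℕ, (v + (m:B) - ((t+1:ℕ):B)) + 1 = v + (m:B) - (t:B) := by
    intro t; push_cast; abel
  let Y : ℕ → gr.Om := fun a => if h : a < n then gr.io (y (Sum.inr ⟨a, h⟩)) else 0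
  let G : ℕ → gr.Om := fun a => if h : a < n then gr.io (γ ⟨a, h⟩) else 0
  let Θ : ℕ → ℕ → gr.Om := fun t a => if h : t < n then if h' : a < n then th gr (s ⟨t, h⟩) (Sum.inr ⟨a, h'⟩) else 0 else 0
  let H : ℕ → gr.Om := fun t => if h : t < n then eta gr d (s ⟨t, h⟩) else 0
  let CI : ℕ → gr.Om := fun t => if h : t < n then gr.io (ci ⟨t, h⟩) else 0
  have iocomm : ∀ (b : B) (_ : ∀ x, b * x = x * b) (z : gr.Om), Commute (gr.io b) z :=
    fun b hb z => gr.io_central b hb z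
  have hΘΘ : ∀ t a b, t + 1 < n → Θ t a * Θ (t+1) b = -(Θ t b * Θ (t+1) a) := by
    intro t a b ht
    have ht' : t < n := by omega
    simp only [Θ, dif_pos ht, dif_pos ht']
    by_cases ha : a < n <;> by_cases hb : b < n
    · simp only [dif_pos ha, dif_pos hb]
      exact Q_zero gr hF (hs1 ⟨t, ht'⟩) (hs2 ⟨t, ht'⟩) (hs1 ⟨t+1, ht⟩) (hs2 ⟨t+1, ht⟩) (hu t) (hsucc t) _ _
    · simp [ha, hb]
    · simp [ha, hb]
    · simp [ha, hb]
  have tot := oddO n (gr.io γ0) (gr.io δ) (gr.io (K - (v + (m:B)))) G Y Θ H CI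
    (iocomm _ hcc) (by
      intro t ht
      simp only [CI, dif_pos ht]
      have := hci ⟨t, ht⟩
      rw [← map_natCast gr.io, ← map_add, ← map_mul, ← map_one gr.io, ← this]
      congr 2
      abel) (by
      intro a b
      simp only [Y]
      by_cases ha : a < n <;> by_cases hb : b < n
      · simp only [dif_pos ha, dif_pos hb]
        rw [← map_mul, ← map_mul, ← map_neg, hyO]
      · simp [ha, hb]
      · simp [ha, hb]
      · simp [ha, hb]) (by
      intro a
      simp only [Y]
      by_cases ha : a < n
      · simp only [dif_pos ha]
        apply gr.tf
        rw [← map_mul, ← map_add]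
        nth_rewrite 1 [hyO]
        simp
      · simp [ha]) hΘΘ (by
      intro t a ht
      apply gr.tf
      nth_rewrite 1 [hΘΘ t a a ht]
      simp) (by
      intro t a ht
      have ht' : t < n := by omega
      simp only [Θ, H, dif_pos ht, dif_pos ht']
      by_cases ha : a < n
      · simp only [dif_pos ha]
        exact th_eta gr hF (hs1 ⟨t, ht'⟩) (hs2 ⟨t, ht'⟩) (hs1 ⟨t+1, ht⟩) (hs2 ⟨t+1, ht⟩) (hu t) (hsucc t) _
      · simp [ha]) (by
      intro t a ht
      simp only [Θ, H, Y, dif_pos ht]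
      by_cases ha : a < n
      · simp only [dif_pos ha]
        exact eta_y gr hF (hs1 ⟨t, ht⟩) (hs2 ⟨t, ht⟩) (hu t) _
      · simp [ha]) (by
      intro t a b ht
      simp only [Θ, Y, dif_pos ht]
      by_cases ha : a < n <;> by_cases hb : b < n
      · simp only [dif_pos ha, dif_pos hb]
        have := th_y gr hF (hs1 ⟨t, ht⟩) (hs2 ⟨t, ht⟩) (hu t) (Sum.inr ⟨a, ha⟩) ⟨b, hb⟩
        rw [this]
        simp [pI]
      · simp [ha, hb]
      · simp [ha, hb]
      · simp [ha, hb]) (by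
      rw [Finset.sum_range, ← map_mul, ← f1, map_add, map_sum]
      congr 1
      refine Finset.sum_congr rfl fun b _ => ?_
      simp only [G, Y, dif_pos b.2, Fin.eta]
      rw [map_mul]) (by
      intro h0
      rw [Finset.sum_range]
      simp only [G, H, Θ, dif_pos h0, Fin.is_lt, dite_true, Fin.eta]
      have hs0 := hs1 ⟨0, h0⟩
      simp only [Nat.cast_zero, sub_zero] at hs0
      have := f2 _ hs0
      simp only [eta, th, mul_neg, Finset.mul_sum, ← mul_assoc, ← map_mul]
      congr 1
      rw [Finset.sum_comm]
      conv_rhs => rw [Finset.sum_comm]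
      refine Finset.sum_congr rfl fun k _ => ?_
      rw [← Finset.sum_mul, ← Finset.sum_mul, ← map_sum, ← map_sum, this, Finset.mul_sum]
      simp only [mul_assoc]) (by
      intro a ha b
      simp only [G, Y, dif_pos ha]
      by_cases hb : b < n
      · simp only [dif_pos hb]
        rw [← map_mul, ← map_mul, f3, map_sub, map_neg, apply_ite gr.io, map_zero]
        simp only [Fin.mk.injEq]
      · have : a ≠ b := by omega
        simp [hb, this]) (by
      intro a
      simp only [Y]
      by_cases ha : a < n
      · simp only [dif_pos ha]
        rw [← map_mul, ← map_mul, f4]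
      · simp [ha])
  have l1 : lpr (fun t => Θ t t + CI t * (Y t * H t)) n
      = (List.ofFn fun t : Fin n => ∑ k, gr.io (S t (Sum.inr t) (Sum.inr k)) * gr.ch k).prod := by
    rw [ofFn_prod_lpr]
    intro t
    simp only [Θ, CI, Y, H, dif_pos t.2, Fin.eta]
    exact hSrow t
  have l2 : lpr (fun t => Θ t t) n
      = (List.ofFn fun t : Fin n => ∑ k, gr.io (s t (Sum.inr t) (Sum.inr k)) * gr.ch k).prod := by
    rw [ofFn_prod_lpr]
    intro t
    simp only [Θ, dif_pos t.2, Fin.eta]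
    rfl
  rw [l1, l2] at tot
  have tot2 := congrArg gr.La tot
  rw [← map_natCast gr.io, ← map_add, ← map_mul, gr.La_left, gr.La_left, gr.La_prod (fun t k => S t (Sum.inr t) (Sum.inr k)),
    gr.La_prod (fun t k => s t (Sum.inr t) (Sum.inr k))] at tot2
  have hcn : δ * (K - (v + (m:B)) + (n:B)) = (K - (v + (m:B)) + (n:B)) * δ := by
    rw [mul_add, add_mul, hcc, (Nat.cast_commute n δ).eq]
  rw [← mul_assoc, ← hcn]
  exact tot2
end facts
end
end

set_option maxHeartbeats 1000000
set_option linter.unusedSectionVars false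
set_option linter.unusedSimpArgs false
noncomputable section

section
variable {m n : ℕ}

lemma mkOp_fmono {M : Type} [AddCommGroup M] [Module ℂ M] (g : FMon m n → M) (x : FMon m n) :
    mkOp g (fmono x) = g x := by
  simp [mkOp, fmono]

lemma op_ext {f g : Module.End ℂ (FSp m n)} (h : ∀ x, f (fmono x) = g (fmono x)) : f = g := by
  apply Finsupp.lhom_ext
  intro a b
  have := h a
  rw [← mul_one b, ← smul_eq_mul, ← Finsupp.smul_single, map_smul, map_smul]
  exact congrArg _ this

lemma divE_f (i : Fin m) (x : FMon m n) : opDivE i (fmono x)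
    = fmono (x.1 - 1, Function.update x.2.1 i (x.2.1 i + 1), x.2.2) := mkOp_fmono _ _
lemma divO_f (i : Fin n) (x : FMon m n) : opDivO i (fmono x) = if x.2.2 i then 0 else
    ((-1 : ℂ) ^ (cntB x.2.2 i)) • fmono (x.1 - 1, x.2.1, Function.update x.2.2 i true) := mkOp_fmono _ _
lemma par0_f (x : FMon m n) : opPar0 (fmono x) = (x.1 : ℂ) • fmono x := mkOp_fmono _ _
lemma parE_f (i : Fin m) (x : FMon m n) : opParE i (fmono x)
    = (x.2.1 i : ℂ) • fmono (x.1 + 1, Function.update x.2.1 i (x.2.1 i - 1), x.2.2) := mkOp_fmono _ _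
lemma parO_f (i : Fin n) (x : FMon m n) : opParO i (fmono x) = if x.2.2 i then
    ((-1 : ℂ) ^ (cntB x.2.2 i)) • fmono (x.1 + 1, x.2.1, Function.update x.2.2 i false) else 0 := mkOp_fmono _ _

lemma cntB_true (b : Fin n → Bool) (i j : Fin n) (h : b i = false) :
    cntB (Function.update b i true) j = cntB b j + if i < j then 1 else 0 := by
  unfold cntB
  split_ifs with hij
  · rw [← Finset.card_insert_of_notMem (a := i)]
    · congr 1; ext k
      by_cases hk : k = i
      · subst hk; simp [hij]
      · simp [hk]
    · simp [h]
  · rw [add_zero]; congr 1; ext k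
    by_cases hk : k = i
    · subst hk; simp [hij]
    · simp [hk]

lemma cntB_false (b : Fin n → Bool) (i j : Fin n) (h : b i = true) :
    cntB b j = cntB (Function.update b i false) j + if i < j then 1 else 0 := by
  have := cntB_true (Function.update b i false) i j (by simp)
  rw [Function.update_idem] at this
  rw [← this]; congr 1; rw [← h]; simp

lemma sg_true (b : Fin n → Bool) (i j : Fin n) (h : b i = false) :
    (-1:ℂ)^cntB (Function.update b i true) j = (if i < j then -1 else 1) * (-1)^cntB b j := by
  rw [cntB_true b i j h]; split_ifs <;> simp [pow_succ]
lemma sg_false (b : Fin n → Bool) (i j : Fin n) (h : b i = true) :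
    (-1:ℂ)^cntB (Function.update b i false) j = (if i < j then -1 else 1) * (-1)^cntB b j := by
  rw [cntB_false b i j h]; split_ifs <;> simp [pow_succ]

lemma sgsq (k : ℕ) : (-1:ℂ)^k * (-1)^k = 1 := by rw [← mul_pow]; simp

lemma xx (a b : Ind m n) : opDiv a * opDiv b = ((-1:ℂ)^(pI a * pI b)) • (opDiv b * opDiv a) := by
  apply op_ext
  rintro ⟨k, e, c⟩
  rcases a with i | i <;> rcases b with j | j
  · simp only [opDiv, Sum.elim_inl, Module.End.mul_apply, divE_f, pI, LinearMap.smul_apply]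
    by_cases h : i = j
    · subst h; simp
    · simp [h, Ne.symm h, Function.update_comm h]
  · simp only [opDiv, Sum.elim_inl, Sum.elim_inr, Module.End.mul_apply, divE_f, divO_f, pI, LinearMap.smul_apply]
    cases hc : c j <;> simp [hc, divE_f]
  · simp only [opDiv, Sum.elim_inl, Sum.elim_inr, Module.End.mul_apply, divE_f, divO_f, pI, LinearMap.smul_apply]
    cases hc : c i <;> simp [hc, divE_f]
  · simp only [opDiv, Sum.elim_inr, Module.End.mul_apply, divO_f, pI, LinearMap.smul_apply]
    by_cases h : i = j
    · subst h; cases hc : c i <;> simp [hc, divO_f]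
    · cases hc : c i <;> cases hd : c j <;> simp [hc, hd, divO_f, h, Ne.symm h]
      rw [sg_true c j i hd, sg_true c i j hc, Function.update_comm h, smul_smul, smul_smul, ← neg_smul]
      congr 1
      rcases lt_or_gt_of_ne h with h | h
      · simp [h, h.not_gt]; ring
      · simp [h, h.not_gt]; ring

lemma dx (a b : Ind m n) : opPar (emb b) * opDiv a = ((-1:ℂ)^(pI a * pI b)) • (opDiv a * opPar (emb b))
    + if a = b then 1 else 0 := by
  apply op_ext
  rintro ⟨k, e, c⟩
  rcases a with i | i <;> rcases b with j | j
  · simp only [opDiv, opPar, emb, Sum.map_inl, Fin.cases_succ, Sum.elim_inl, Module.End.mul_apply, divE_f, parE_f, pI, LinearMap.smul_apply, LinearMap.add_apply, map_smul]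
    by_cases h : i = j
    · subst h
      simp
      rcases Nat.eq_zero_or_pos (e i) with h0 | h0
      · have : e = Function.update e i 0 := by rw [← h0]; simp
        simp [h0, ← this]
      · rw [Nat.sub_add_cancel h0]; simp [add_smul]
    · simp [h, Ne.symm h, Function.update_comm h]
  · simp only [opDiv, opPar, emb, Sum.map_inr, id, Sum.elim_inl, Sum.elim_inr, Module.End.mul_apply, divE_f, parO_f, pI, LinearMap.smul_apply, LinearMap.add_apply, map_smul]
    cases hc : c j <;> simp [hc, divE_f]
  · simp only [opDiv, opPar, emb, Sum.map_inl, Fin.cases_succ, Sum.elim_inl, Sum.elim_inr, Module.End.mul_apply, divO_f, parE_f, pI, LinearMap.smul_apply, LinearMap.add_apply, map_smul]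
    cases hc : c i <;> simp [hc, parE_f]
    rw [smul_smul, smul_smul, mul_comm]
  · simp only [opDiv, opPar, emb, Sum.map_inr, id, Sum.elim_inr, Module.End.mul_apply, divO_f, parO_f, pI, LinearMap.smul_apply, LinearMap.add_apply, map_smul]
    by_cases h : i = j
    · subst h; cases hc : c i <;> simp [hc, divO_f, parO_f]
      · rw [sg_true c i i hc, smul_smul]; simp [sgsq]; rw [← hc]; simp
      · rw [sg_false c i i hc, smul_smul]; simp [sgsq]; rw [← hc]; simp
    · cases hc : c i <;> cases hd : c j <;> simp [hc, hd, divO_f, parO_f, h, Ne.symm h]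
      rw [sg_true c i j hc, sg_false c j i hd, Function.update_comm h, smul_smul, smul_smul, ← neg_smul]
      congr 1
      rcases lt_or_gt_of_ne h with h | h
      · simp [h, h.not_gt]; ring
      · simp [h, h.not_gt]; ring

def dg (x : FMon m n) : ℂ := (x.1 : ℂ) + (∑ i, (x.2.1 i : ℂ)) + ∑ i, (if x.2.2 i then 1 else 0 : ℂ)

lemma E_f (x : FMon m n) : ((En m n : Dprime m n) : Module.End ℂ (FSp m n)) (fmono x) = dg x • fmono x := by
  obtain ⟨k, e, c⟩ := x
  have : ((En m n : Dprime m n) : Module.End ℂ (FSp m n)) = opPar0 + ∑ i, opDivE i * opParE i + ∑ i, opDivO i * opParO i := by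
    have h : ((En m n : Dprime m n) : Module.End ℂ (FSp m n)) = ∑ i : Ind (m+1) n, ((tdel i i : Dprime m n) : Module.End ℂ (FSp m n)) := by
      rw [En]; exact map_sum (Dprime m n).val _ _
    rw [h, Fintype.sum_sum_type, Fin.sum_univ_succ]
    congr 2
  rw [this]
  simp only [LinearMap.add_apply, LinearMap.sum_apply, Module.End.mul_apply, par0_f, parE_f, parO_f, map_smul, divE_f, dg, add_smul, Finset.sum_smul]
  congr 2
  · refine Finset.sum_congr rfl fun i _ => ?_
    simp
    rcases Nat.eq_zero_or_pos (e i) with h0 | h0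
    · simp [h0]
    · rw [Nat.sub_add_cancel h0]; simp
  · funext i
    by_cases hc : c i = true
    swap
    · rw [if_neg hc, if_neg hc]; simp
    rw [if_pos hc, if_pos hc]
    simp [divO_f]
    rw [sg_false c i i hc, smul_smul]; simp [sgsq]; rw [← hc]; simp

lemma comm_deg (f : Module.End ℂ (FSp m n)) (g : FMon m n → FMon m n) (r : FMon m n → ℂ)
    (hf : ∀ x, f (fmono x) = r x • fmono (g x)) (hg : ∀ x, r x ≠ 0 → dg (g x) = dg x) :
    ((En m n : Dprime m n) : Module.End ℂ (FSp m n)) * f = f * ((En m n : Dprime m n) : Module.End ℂ (FSp m n)) := by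
  apply op_ext
  intro x
  rw [Module.End.mul_apply, Module.End.mul_apply, hf, E_f, map_smul, map_smul, hf, E_f]
  by_cases h : r x = 0
  · simp [h]
  · rw [hg x h, smul_comm]

lemma sum_upd {k : ℕ} {α : Type} (e : Fin k → α) (i : Fin k) (v : α) (f : α → ℂ) :
    ∑ j, f (Function.update e i v j) = ∑ j, f (e j) + (f v - f (e i)) := by
  rw [← Finset.add_sum_erase _ _ (Finset.mem_univ i), ← Finset.add_sum_erase _ (fun j => f (e j)) (Finset.mem_univ i)]
  rw [Finset.sum_congr rfl (g := fun j => f (e j))]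
  · simp; ring
  · intro j hj; simp [Finset.ne_of_mem_erase hj]

lemma E_div (a : Ind m n) : ((En m n : Dprime m n) : Module.End ℂ (FSp m n)) * opDiv a = opDiv a * ((En m n : Dprime m n) : Module.End ℂ (FSp m n)) := by
  rcases a with i | i
  · refine comm_deg _ (fun x => (x.1 - 1, Function.update x.2.1 i (x.2.1 i + 1), x.2.2)) (fun _ => 1) (fun x => ?_) ?_
    · rw [one_smul]; exact divE_f i x
    · rintro ⟨k, e, c⟩ _
      simp only [dg, sum_upd e i _ (fun z : ℕ => (z : ℂ))]
      push_cast; ring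
  · refine comm_deg _ (fun x => (x.1 - 1, x.2.1, Function.update x.2.2 i true)) (fun x => if x.2.2 i then 0 else (-1 : ℂ) ^ (cntB x.2.2 i)) (fun x => ?_) ?_
    · rw [ite_smul, zero_smul]; exact divO_f i x
    · rintro ⟨k, e, c⟩ h
      have hc : c i = false := by by_contra h'; simp at h'; simp [h'] at h
      simp only [dg, sum_upd c i _ (fun z : Bool => if z then (1:ℂ) else 0), hc]
      push_cast; simp; ring

lemma E_par (a : Ind (m+1) n) : ((En m n : Dprime m n) : Module.End ℂ (FSp m n)) * opPar a = opPar a * ((En m n : Dprime m n) : Module.End ℂ (FSp m n)) := by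
  rcases a with i | i
  · refine Fin.cases ?_ (fun i => ?_) i
    · exact comm_deg _ (fun x => x) (fun x => x.1) (fun x => par0_f x) (fun _ _ => rfl)
    · refine comm_deg _ (fun x => (x.1 + 1, Function.update x.2.1 i (x.2.1 i - 1), x.2.2)) (fun x => (x.2.1 i : ℂ)) (fun x => parE_f i x) ?_
      rintro ⟨k, e, c⟩ h
      simp only [dg, sum_upd e i _ (fun z : ℕ => (z : ℂ))]
      have : 1 ≤ e i := by
        rcases Nat.eq_zero_or_pos (e i) with h0 | h0
        · simp [h0] at h
        · exact h0
      push_cast [Nat.cast_sub this]; ring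
  · refine comm_deg _ (fun x => (x.1 + 1, x.2.1, Function.update x.2.2 i false)) (fun x => if x.2.2 i then (-1 : ℂ) ^ (cntB x.2.2 i) else 0) (fun x => ?_) ?_
    · rw [ite_smul, zero_smul]; exact parO_f i x
    · rintro ⟨k, e, c⟩ h
      have hc : c i = true := by by_contra h'; simp at h'; simp [h'] at h
      simp only [dg, sum_upd c i _ (fun z : Bool => if z then (1:ℂ) else 0), hc]
      push_cast; simp; ring
end
end

set_option maxHeartbeats 1000000
set_option synthInstance.maxHeartbeats 400000
set_option linter.unusedSectionVars false
set_option linter.unusedSimpArgs false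
noncomputable section

section
variable {m n : ℕ}

lemma pI_cases (i : Ind m n) : pI i = 0 ∨ pI i = 1 := by
  rcases i with i | i
  · exact Or.inl rfl
  · exact Or.inr rfl

lemma pI_emb (a : Ind m n) : pI (emb a) = pI a := by rcases a with a | a <;> rfl

lemma negpow_smul {A : Type} [Ring A] [Algebra ℂ A] (e : ℕ) (x : A) : (-1 : A)^e * x = ((-1:ℂ)^e) • x := by
  rw [Algebra.smul_def, map_pow, map_neg, map_one]

lemma gl_rel {ι : Type} (p : ι → ℕ) [DecidableEq ι] (i j k l : ι) :
    gen p i j * gen p k l - ((-1 : ℂ) ^ ((p i + p j) * (p k + p l))) • (gen p k l * gen p i j)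
    = (if j = k then gen p i l else 0) - ((-1 : ℂ) ^ ((p i + p j) * (p k + p l))) •
      (if l = i then gen p k j else 0) := by
  have := RingQuot.mkAlgHom_rel ℂ (glRel.basic (p := p) i j k l)
  simp only [map_sub, map_mul, map_smul, apply_ite (RingQuot.mkAlgHom ℂ (glRel ι p)), map_zero] at this
  exact this

variable (ST : SuperTensor m n)

lemma t_xx (a b : Ind m n) : (tdiv a : Dprime m n) * tdiv b = ((-1:ℂ)^(pI a * pI b)) • (tdiv b * tdiv a) :=
  Subtype.ext (xx a b)

lemma t_dx (a b : Ind m n) : (tpar (emb b) : Dprime m n) * tdiv a = ((-1:ℂ)^(pI a * pI b)) • (tdiv a * tpar (emb b))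
    + if a = b then 1 else 0 := by
  have := dx a b
  by_cases h : a = b
  · rw [if_pos h] at this ⊢
    exact Subtype.ext this
  · rw [if_neg h] at this ⊢
    exact Subtype.ext this

lemma E_central_D (x : Dprime m n) : En m n * x = x * En m n := by
  apply Subtype.ext
  obtain ⟨x, hx⟩ := x
  change ((En m n : Dprime m n) : Module.End ℂ (FSp m n)) * x = x * ((En m n : Dprime m n) : Module.End ℂ (FSp m n))
  unfold Dprime at hx
  induction hx using Algebra.adjoin_induction with
  | mem x hx =>
    rcases hx with ⟨a, rfl⟩ | ⟨a, rfl⟩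
    · exact E_div a
    · exact E_par a
  | algebraMap r => exact (Algebra.commutes r _).symm
  | add x y _ _ hx hy => rw [mul_add, add_mul, hx, hy]
  | mul x y _ _ hx hy => rw [← mul_assoc, hx, mul_assoc, hy, mul_assoc]

lemma tdivB_emb (a : Ind m n) : (tdivB (emb a) : Dprime m n) = tdiv a := by rcases a with a | a <;> rfl

lemma tdel_z0 (b : Ind (m+1) n) : (tdel z0 b : Dprime m n) = tpar b := one_mul _

lemma tdel_emb (a : Ind m n) (b : Ind (m+1) n) : (tdel (emb a) b : Dprime m n) = tdiv a * tpar b := by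
  rw [tdel, tdivB_emb]

lemma En_eq : (En m n : Dprime m n) = tpar z0 + ∑ a : Ind m n, tdiv a * tpar (emb a) := by
  rw [En, sum_hat, tdel_z0]; simp only [tdel_emb]

lemma sq_sign (e : ℕ) : ((-1:ℂ)^e) * (-1)^e = 1 := by rw [← mul_pow]; simp

lemma E_comm_gen (i j : Ind m n) : ST.inU (gen pI i j) * ST.inD (En m n) = ST.inD (En m n) * ST.inU (gen pI i j) := by
  rw [En_eq, map_add, map_sum, mul_add, add_mul, Finset.mul_sum, Finset.sum_mul]
  congr 1
  · rw [ST.comm_par]; simp [pI, z0]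
  · refine Finset.sum_congr rfl fun a _ => ?_
    rw [map_mul, ← mul_assoc, ST.comm_div, smul_mul_assoc, mul_assoc, ST.comm_par, mul_smul_comm, smul_smul, pI_emb,
      sq_sign, one_smul, mul_assoc]

lemma E_comm_U (u : UEA (Ind m n) pI) : ST.inU u * ST.inD (En m n) = ST.inD (En m n) * ST.inU u := by
  obtain ⟨f, rfl⟩ := RingQuot.mkAlgHom_surjective ℂ (glRel (Ind m n) pI) u
  induction f using FreeAlgebra.induction with
  | grade0 r => rw [AlgHom.commutes, AlgHom.commutes]; exact Algebra.commutes _ _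
  | grade1 x => exact E_comm_gen ST x.1 x.2
  | mul a b ha hb => rw [map_mul, map_mul, mul_assoc, hb, ← mul_assoc, ha, mul_assoc]
  | add a b ha hb => rw [map_add, map_add, mul_add, add_mul, ha, hb]

lemma E_central (x : ST.T) : ST.inD (En m n) * x = x * ST.inD (En m n) := by
  obtain ⟨z, rfl⟩ := ST.equiv.surjective x
  induction z with
  | zero => simp
  | add a b ha hb => rw [map_add, mul_add, add_mul, ha, hb]
  | tmul d u =>
    rw [ST.equiv_tmul, mul_assoc, E_comm_U, ← mul_assoc, ← mul_assoc, ← map_mul, ← map_mul, E_central_D]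

def FA : Mt m n ST.T := fun i j => ((-1:ℂ)^pI i) • ST.inU (gen pI i j)
def yA (a : Ind m n) : ST.T := ((-1:ℂ)^pI a) • ST.inD (tdiv a)
def dA (b : Ind m n) : ST.T := ST.inD (tpar (emb b))
def KA : ST.T := ST.inD (En m n) + (m : ST.T) - (n : ST.T)

lemma fdataA : FData (FA ST) (yA ST) (dA ST) where
  hFF i j k l := by
    have h := congrArg ST.inU (gl_rel pI i j k l)
    simp only [map_sub, map_smul, map_mul] at h
    have e1 : (if j = k then FA ST i l else 0) = ((-1:ℂ)^pI i) • ST.inU (if j = k then gen pI i l else 0) := by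
      split_ifs
      · rfl
      · simp
    have e2 : (if l = i then FA ST k j else 0) = ((-1:ℂ)^pI k) • ST.inU (if l = i then gen pI k j else 0) := by
      split_ifs
      · rfl
      · simp
    have hP : pI j ≠ pI k → ST.inU (if j = k then gen pI i l else 0) = 0 := by
      intro h; rw [if_neg (fun h' => h (congrArg pI h')), map_zero]
    have hQ : pI l ≠ pI i → ST.inU (if l = i then gen pI k j else 0) = 0 := by
      intro h; rw [if_neg (fun h' => h (congrArg pI h')), map_zero]
    rw [e1, e2]
    simp only [FA, smul_mul_smul_comm, negpow_smul, smul_sub, smul_smul]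
    generalize ST.inU (if j = k then gen pI i l else 0) = P at *
    generalize ST.inU (if l = i then gen pI k j else 0) = Q at *
    generalize ST.inU (gen pI i j) * ST.inU (gen pI k l) = X at *
    generalize ST.inU (gen pI k l) * ST.inU (gen pI i j) = Y at *
    rw [sub_eq_iff_eq_add] at h
    rw [h]
    rcases pI_cases i with hi | hi <;> rcases pI_cases j with hj | hj <;> rcases pI_cases k with hk | hk <;>
      rcases pI_cases l with hl | hl <;> simp [hi, hj, hk, hl] at hP hQ ⊢ <;> (try simp [hP, hQ]) <;> (try norm_num) <;> (try abel)
  hFy i j a := by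
    simp only [FA, yA, smul_mul_smul_comm, negpow_smul, ST.comm_div, smul_smul]
    congr 1
    rcases pI_cases i with hi | hi <;> rcases pI_cases j with hj | hj <;> rcases pI_cases a with hk | hk <;>
      simp [hi, hj, hk]
  hFd i j a := by
    simp only [FA, dA, smul_mul_assoc, mul_smul_comm, negpow_smul, ST.comm_par, smul_smul, pI_emb]
    congr 1
    rcases pI_cases i with hi | hi <;> rcases pI_cases j with hj | hj <;> rcases pI_cases a with hk | hk <;>
      simp [hi, hj, hk]
  hyy a b := by
    simp only [yA, smul_mul_smul_comm, negpow_smul, ← map_mul, t_xx a b, map_smul, smul_smul]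
    congr 1
    ring
  hdy a b := by
    simp only [yA, dA, smul_mul_assoc, mul_smul_comm, negpow_smul, ← map_mul, t_dx a b, map_smul, smul_smul, map_add, smul_add]
    congr 1
    split_ifs
    · rw [map_one, Algebra.smul_def, mul_one, map_pow, map_neg, map_one]
    · simp

lemma sum_sign : ∑ a : Ind m n, ((-1:ℂ)^pI a) = (m:ℂ) - n := by
  rw [Fintype.sum_sum_type]; simp [pI]; ring

variable (R : ST.T) (φ : UEA (Ind (m+1) n) pI →ₐ[ℂ] ST.T)

def NA : Mt (m+1) n ST.T := fun i j => ((-1:ℂ)^pI i) • φ (gen pI i j) - if i = j then R else 0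

lemma ndataA (hφ : IsPhi ST R φ) : NData (NA ST R φ) (FA ST) (yA ST) (dA ST) (ST.inD (tpar z0)) (KA ST) where
  hK x := by
    rw [KA, sub_mul, add_mul, mul_sub, mul_add, E_central, (Nat.cast_commute m x).eq, (Nat.cast_commute n x).eq]
  hKd := by
    have e : ∀ b : Ind m n, dA ST b * yA ST b = ST.inD (tdiv b * tpar (emb b)) + ((-1:ℂ)^pI b) • (1 : ST.T) := by
      intro b
      rw [dA, yA, mul_smul_comm, ← map_mul, t_dx, if_pos rfl, map_add, map_one, smul_add, map_smul, smul_smul]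
      congr 1
      rcases pI_cases b with h | h <;> simp [h]
    simp only [e]
    rw [Finset.sum_add_distrib, ← Finset.sum_smul, sum_sign, KA, En_eq, map_add, map_sum, sub_smul, Algebra.smul_def, Algebra.smul_def,
      map_natCast, map_natCast, mul_one, mul_one]
    abel
  N00 := by
    simp only [NA, if_true]
    rw [hφ.2.2.2, tdel_z0]
    simp [pI, z0]
  N0 b := by
    simp only [NA]
    rw [if_neg (emb_ne_z0 b).symm, hφ.2.2.1, tdel_z0]
    simp [pI, z0, dA]
  Na0 a := by
    simp only [NA]
    rw [if_neg (emb_ne_z0 a), hφ.2.1, tdel_emb, pI_emb, sub_zero, smul_sub, map_mul, yA, smul_mul_assoc, Finset.smul_sum]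
    congr 1
    refine Finset.sum_congr rfl fun j _ => ?_
    simp only [FA, yA, smul_mul_smul_comm, ST.comm_div, smul_smul]
    congr 1
    rcases pI_cases a with hi | hi <;> rcases pI_cases j with hj | hj <;> simp [hi, hj]
  Nab a b := by
    simp only [NA]
    rw [hφ.1, tdel_emb, pI_emb, map_mul, smul_add, smul_add, yA, dA, smul_mul_assoc, FA, add_sub_assoc]
    simp only [emb_injective.eq_iff]
    by_cases h : a = b
    · subst h
      rw [if_pos rfl, if_pos rfl, smul_smul]
      have : ((-1:ℂ)^pI a) * (-1)^(pI a * pI a) = 1 := by rcases pI_cases a with h | h <;> simp [h]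
      rw [this, one_smul, sub_self, add_zero]
    · rw [if_neg h, if_neg h]; simp

lemma hMMA (hR : ∀ x, R * x = x * R) (k i l j : Fin (m+1)) :
    NA ST R φ (Sum.inl k) (Sum.inl i) * NA ST R φ (Sum.inl l) (Sum.inl j)
      - NA ST R φ (Sum.inl l) (Sum.inl j) * NA ST R φ (Sum.inl k) (Sum.inl i)
      = (if i = l then NA ST R φ (Sum.inl k) (Sum.inl j) else 0) - (if j = k then NA ST R φ (Sum.inl l) (Sum.inl i) else 0) := by
  have h := congrArg φ (gl_rel (pI (m := m+1) (n := n)) (Sum.inl k) (Sum.inl i) (Sum.inl l) (Sum.inl j))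
  have e : ∀ a b : Fin (m+1), NA ST R φ (Sum.inl a) (Sum.inl b) = φ (gen pI (Sum.inl a) (Sum.inl b)) - if a = b then R else 0 := by
    intro a b; simp [NA, pI]
  simp only [e]
  have hp : ∀ a : Fin (m+1), pI (Sum.inl a : Ind (m+1) n) = 0 := fun _ => rfl
  simp only [hp, add_zero, mul_zero, pow_zero, one_smul, map_sub, map_mul, apply_ite φ, map_zero, Sum.inl.injEq] at h
  generalize φ (gen pI (Sum.inl k) (Sum.inl i)) = X at *
  generalize φ (gen pI (Sum.inl l) (Sum.inl j)) = Y at *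
  have c1 : (X - if k = i then R else 0) * (Y - if l = j then R else 0) - (Y - if l = j then R else 0) * (X - if k = i then R else 0)
      = X * Y - Y * X := by
    split_ifs
    · rw [mul_sub, sub_mul, sub_mul, mul_sub, sub_mul, sub_mul, hR X, hR Y]; abel
    · rw [sub_zero, mul_sub, sub_mul, hR]; abel
    · rw [sub_zero, mul_sub, sub_mul, hR]; abel
    · rw [sub_zero, sub_zero]
  rw [c1, h]
  by_cases h1 : i = l <;> by_cases h2 : j = k
  · subst h1 h2; simp
  · simp [h1, h2, Ne.symm h2]
  · simp [h1, h2, Ne.symm h1]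
  · simp [h1, h2]
end
end

set_option maxHeartbeats 1000000
set_option synthInstance.maxHeartbeats 400000
set_option linter.unusedSectionVars false
set_option linter.unusedSimpArgs false
noncomputable section

section
variable {m n : ℕ} {A : Type} [Ring A]

lemma C_central {r : A} (h : ∀ x, r * x = x * r) (x : TSer A) :
    HahnSeries.C r * x = x * HahnSeries.C r := by
  ext k
  rw [HahnSeries.C_apply, HahnSeries.coeff_mul_single_zero, HahnSeries.coeff_single_zero_mul, h]

lemma coeff_Cmul (r : A) (x : TSer A) (p : ℤ) : (HahnSeries.C r * x).coeff p = r * x.coeff p := by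
  rw [HahnSeries.C_apply, HahnSeries.coeff_single_zero_mul]

lemma coeff_mulC (r : A) (x : TSer A) (p : ℤ) : (x * HahnSeries.C r).coeff p = x.coeff p * r := by
  rw [HahnSeries.C_apply, HahnSeries.coeff_mul_single_zero]

lemma coeff_Tmul (x : TSer A) (p : ℤ) : (Tv * x).coeff p = x.coeff (p+1) := by
  rw [Tv, HahnSeries.coeff_single_mul, one_mul, sub_neg_eq_add]

lemma coeff_mulT (x : TSer A) (p : ℤ) : (x * Tv).coeff p = x.coeff (p+1) := by
  rw [Tv, HahnSeries.coeff_mul_single, mul_one, sub_neg_eq_add]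

lemma T_central (x : TSer A) : Tv * x = x * Tv := by
  ext k; rw [coeff_Tmul, coeff_mulT]

variable {ι : Type} [Fintype ι] [DecidableEq ι]

def Wco (X : Matrix ι ι A) (i j : ι) (p : ℤ) : A := if 1 ≤ p then -(X ^ (p-1).toNat) i j else 0

def Wm (X : Matrix ι ι A) : Matrix ι ι (TSer A) := fun i j =>
  HahnSeries.ofSuppBddBelow (Wco X i j) ⟨1, by
    intro p hp
    by_contra h
    exact hp (if_neg h)⟩

lemma Wm_coeff (X : Matrix ι ι A) (i j : ι) (p : ℤ) : (Wm X i j).coeff p = Wco X i j p := rfl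

lemma Wco_succ (X : Matrix ι ι A) (i j : ι) (k : ℕ) : Wco X i j ((k:ℤ)+1) = -(X^k) i j := by
  rw [Wco, if_pos (by omega)]; simp

lemma Wco_nonpos (X : Matrix ι ι A) (i j : ι) (p : ℤ) (h : p ≤ 0) : Wco X i j p = 0 := by
  rw [Wco, if_neg (by omega)]

lemma Wco_rec (X : Matrix ι ι A) (i j : ι) (p : ℤ) (f : A)
    (hf : ∀ k : ℕ, p = k + 1 → f = -(X^(k+1)) i j) (hf0 : p ≤ 0 → f = 0) :
    f - Wco X i j (p+1) = ((1 : Matrix ι ι (TSer A)) i j).coeff p := by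
  have e : ((1 : Matrix ι ι (TSer A)) i j).coeff p = if p = 0 then (1 : Matrix ι ι A) i j else 0 := by
    rw [Matrix.one_apply, Matrix.one_apply]
    split_ifs <;> simp_all [HahnSeries.coeff_one]
  rw [e]
  rcases lt_trichotomy p 0 with h | h | h
  · rw [hf0 h.le, Wco_nonpos _ _ _ _ (by omega), if_neg (by omega), sub_zero]
  · subst h
    have := Wco_succ X i j 0
    rw [hf0 le_rfl, if_pos rfl]
    rw [Nat.cast_zero] at this
    rw [this, pow_zero]; simp
  · obtain ⟨k, rfl⟩ : ∃ k : ℕ, p = k + 1 := ⟨(p-1).toNat, by omega⟩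
    have := Wco_succ X i j (k+1)
    rw [Nat.cast_add, Nat.cast_one] at this
    rw [hf k rfl, this, if_neg (by omega), sub_self]

lemma W_right (X : Matrix ι ι A) : (X.map HahnSeries.C - (Tv : TSer A) • (1 : Matrix ι ι (TSer A))) * Wm X = 1 := by
  refine Matrix.ext fun i j => ?_
  ext p
  have e : ((X.map HahnSeries.C - (Tv : TSer A) • (1 : Matrix ι ι (TSer A))) * Wm X : Matrix ι ι (TSer A)) i j
      = ∑ k, HahnSeries.C (X i k) * Wm X k j - Tv * Wm X i j := by
    rw [sub_mul, smul_mul_assoc, one_mul]; rfl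
  rw [e, HahnSeries.coeff_sub, HahnSeries.coeff_sum, coeff_Tmul, Wm_coeff]
  simp only [coeff_Cmul, Wm_coeff]
  refine Wco_rec X i j p _ (fun k hk => ?_) (fun h => ?_)
  · subst hk
    simp only [Wco_succ]
    rw [pow_succ', Matrix.mul_apply, ← Finset.sum_neg_distrib]
    simp only [mul_neg]
  · exact Finset.sum_eq_zero fun k _ => by rw [Wco_nonpos _ _ _ _ h, mul_zero]

lemma W_left (X : Matrix ι ι A) : Wm X * (X.map HahnSeries.C - (Tv : TSer A) • (1 : Matrix ι ι (TSer A))) = 1 := by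
  refine Matrix.ext fun i j => ?_
  ext p
  have e : (Wm X * (X.map HahnSeries.C - (Tv : TSer A) • (1 : Matrix ι ι (TSer A))) : Matrix ι ι (TSer A)) i j
      = ∑ k, Wm X i k * HahnSeries.C (X k j) - Wm X i j * Tv := by
    rw [mul_sub, Matrix.sub_apply]
    congr 1
    rw [Matrix.mul_apply]
    simp only [Matrix.smul_apply, Matrix.one_apply, smul_eq_mul, mul_ite, mul_one, mul_zero,
      Finset.sum_ite_eq', Finset.mem_univ, if_true]
  rw [e, HahnSeries.coeff_sub, HahnSeries.coeff_sum, coeff_mulT, Wm_coeff]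
  simp only [coeff_mulC, Wm_coeff]
  refine Wco_rec X i j p _ (fun k hk => ?_) (fun h => ?_)
  · subst hk
    simp only [Wco_succ]
    rw [pow_succ, Matrix.mul_apply, ← Finset.sum_neg_distrib]
    simp only [neg_mul]
  · exact Finset.sum_eq_zero fun k _ => by rw [Wco_nonpos _ _ _ _ h, zero_mul]

lemma unit_T (X : Matrix ι ι A) (c : A) :
    IsUnit (X.map HahnSeries.C - ((Tv : TSer A) + HahnSeries.C c) • (1 : Matrix ι ι (TSer A))) := by
  have e : X.map HahnSeries.C - ((Tv : TSer A) + HahnSeries.C c) • (1 : Matrix ι ι (TSer A))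
      = (X - c • (1 : Matrix ι ι A)).map HahnSeries.C - (Tv : TSer A) • (1 : Matrix ι ι (TSer A)) := by
    refine Matrix.ext fun i j => ?_
    simp only [Matrix.sub_apply, Matrix.smul_apply, Matrix.map_apply, Matrix.one_apply, smul_eq_mul, map_sub]
    by_cases h : i = j
    · simp only [if_pos h, mul_one]; abel
    · simp only [if_neg h, mul_zero, map_zero, sub_zero]
  rw [e]
  exact ⟨⟨_, Wm _, W_right _, W_left _⟩, rfl⟩

lemma inverse_eq {M : Type} [Ring M] {a b : M} (h1 : a * b = 1) (h2 : b * a = 1) : Ring.inverse a = b :=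
  Ring.inverse_unit (⟨a, b, h1, h2⟩ : Mˣ)

variable {B : Type} [Ring B]

lemma map_ite0 (f : A →+* B) (p : Prop) [Decidable p] (x : A) : (if p then f x else 0) = f (if p then x else 0) := by
  split_ifs
  · rfl
  · rw [map_zero]

lemma FData.map {F : Mt m n A} {y d : Ind m n → A} (h : FData F y d) (f : A →+* B) :
    FData (F.map f) (fun a => f (y a)) (fun a => f (d a)) where
  hFF i j k l := by
    have := congrArg f (h.hFF i j k l)
    simpa only [map_sub, map_mul, map_pow, map_neg, map_one, Matrix.map_apply, map_ite0] using this
  hFy i j a := by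
    have := congrArg f (h.hFy i j a)
    simpa only [map_sub, map_mul, map_pow, map_neg, map_one, Matrix.map_apply, map_ite0] using this
  hFd i j a := by
    have := congrArg f (h.hFd i j a)
    simpa only [map_sub, map_mul, map_pow, map_neg, map_one, Matrix.map_apply, map_ite0] using this
  hyy a b := by
    have := congrArg f (h.hyy a b)
    simpa only [map_sub, map_mul, map_pow, map_neg, map_one, Matrix.map_apply, map_ite0] using this
  hdy a b := by
    have := congrArg f (h.hdy a b)
    rw [map_add, ← map_ite0] at this
    simpa only [map_sub, map_mul, map_pow, map_neg, map_one, Matrix.map_apply] using this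

lemma NData.map {N : Mt (m+1) n A} {F : Mt m n A} {y d : Ind m n → A} {d0 K : A}
    (h : NData N F y d d0 K) (f : A →+* B) (hK : ∀ x, f K * x = x * f K) :
    NData (N.map f) (F.map f) (fun a => f (y a)) (fun a => f (d a)) (f d0) (f K) where
  hK := hK
  hKd := by rw [← h.hKd, map_add, map_sum]; simp only [map_mul]
  N00 := by rw [Matrix.map_apply, h.N00]
  N0 b := by rw [Matrix.map_apply, h.N0]
  Na0 a := by rw [Matrix.map_apply, h.Na0, map_sub, map_sum]; simp only [map_mul, Matrix.map_apply]
  Nab a b := by rw [Matrix.map_apply, h.Nab, map_add, map_mul, Matrix.map_apply]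

lemma capelli_eq [Algebra ℂ A] (E N : Mt m n (TSer A)) (r v : TSer A)
    (hE : E = N + r • (1 : Mt m n (TSer A))) :
    capelli E (v + r) = cdet (fun i j => N (Sum.inl i) (Sum.inl j)) v *
      rdet (fun t : Fin n => Ring.inverse (N - (v + (m : TSer A) - ((t : ℕ) : TSer A) - 1) • (1 : Mt m n (TSer A)))) := by
  have hc : ∀ t : ℕ, ((t : ℂ) • (1 : TSer A)) = (t : TSer A) := fun t => by
    rw [Algebra.smul_def, mul_one, map_natCast]
  unfold capelli cdet rdet
  congr 1
  · refine Finset.sum_congr rfl fun σ _ => ?_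
    congr 3
    funext t
    rw [hc, hE, Matrix.add_apply, Matrix.smul_apply, Matrix.one_apply, smul_eq_mul]
    by_cases h : σ t = t
    · simp only [h, if_true, mul_one]; abel
    · have h' : (Sum.inl (σ t) : Ind m n) ≠ Sum.inl t := fun e => h (Sum.inl.inj e)
      simp only [if_neg h, if_neg h', mul_zero, add_zero]
  · refine Finset.sum_congr rfl fun τ _ => ?_
    congr 3
    funext t
    congr 2
    rw [sub_smul, sub_smul, hc, hc, one_smul, hE, ← sub_eq_zero]
    simp only [sub_smul, add_smul, one_smul]
    abel
end
end

set_option maxHeartbeats 1000000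
set_option synthInstance.maxHeartbeats 400000
set_option linter.unusedSectionVars false
set_option linter.unusedSimpArgs false
noncomputable section

section
variable {m n : ℕ}

lemma scrE_phi (ST : SuperTensor m n) (R : ST.T) (φ : UEA (Ind (m+1) n) pI →ₐ[ℂ] ST.T) :
    (scrE (m+1) n fun i j => φ (gen pI i j)) = (NA ST R φ).map HahnSeries.C
      + (HahnSeries.C R : TSer ST.T) • (1 : Mt (m+1) n (TSer ST.T)) := by
  refine Matrix.ext fun i j => ?_
  rw [Matrix.add_apply, Matrix.smul_apply, Matrix.one_apply, Matrix.map_apply, smul_eq_mul, scrE, NA, map_sub]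
  by_cases h : i = j
  · simp only [if_pos h, mul_one, sub_add_cancel]
  · simp only [if_neg h, mul_zero, map_zero, sub_zero, add_zero]

lemma scrE_F (ST : SuperTensor m n) :
    (scrE m n fun i j => ST.inU (gen pI i j)) = (FA ST).map HahnSeries.C
      + (0 : TSer ST.T) • (1 : Mt m n (TSer ST.T)) := by
  rw [zero_smul, add_zero]; rfl

lemma main_v (ST : SuperTensor m n) (R : ST.T) (hR : ∀ x, R * x = x * R)
    (φ : UEA (Ind (m+1) n) pI →ₐ[ℂ] ST.T) (hφ : IsPhi ST R φ) (v : TSer ST.T) (hv : ∀ x, v * x = x * v)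
    (hU : ∀ t : Fin n, IsUnit ((NA ST R φ).map HahnSeries.C
      - (v + (m : TSer ST.T) - ((t : ℕ) : TSer ST.T)) • (1 : Mt (m+1) n (TSer ST.T)))) :
    capelli (m := m+1) (n := n) (scrE (m+1) n fun i j => φ (gen pI i j)) (v + HahnSeries.C R) =
      (HahnSeries.C (ST.inD (En m n)) - v) *
        capelli (scrE m n fun i j => ST.inU (gen pI i j)) (v + 1) := by
  have hN := (ndataA ST R φ hφ).map (HahnSeries.C : ST.T →+* TSer ST.T) (C_central (ndataA ST R φ hφ).hK)
  have hF := (fdataA ST).map (HahnSeries.C : ST.T →+* TSer ST.T)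
  have hMM : ∀ k i l j : Fin (m+1), ((NA ST R φ).map (HahnSeries.C : ST.T →+* TSer ST.T)) (Sum.inl k) (Sum.inl i)
        * ((NA ST R φ).map (HahnSeries.C : ST.T →+* TSer ST.T)) (Sum.inl l) (Sum.inl j)
      - ((NA ST R φ).map (HahnSeries.C : ST.T →+* TSer ST.T)) (Sum.inl l) (Sum.inl j)
        * ((NA ST R φ).map (HahnSeries.C : ST.T →+* TSer ST.T)) (Sum.inl k) (Sum.inl i)
      = (if i = l then ((NA ST R φ).map (HahnSeries.C : ST.T →+* TSer ST.T)) (Sum.inl k) (Sum.inl j) else 0)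
        - (if j = k then ((NA ST R φ).map (HahnSeries.C : ST.T →+* TSer ST.T)) (Sum.inl l) (Sum.inl i) else 0) := by
    intro k i l j
    have := congrArg (HahnSeries.C : ST.T →+* TSer ST.T) (hMMA ST R φ hR k i l j)
    simpa only [map_sub, map_mul, Matrix.map_apply, map_ite0] using this
  obtain ⟨s, hs1, hs2, hs⟩ := core_main hF hN v hv hMM (fun t => Ring.inverse _)
    (fun t => Ring.mul_inverse_cancel _ (hU t)) (fun t => Ring.inverse_mul_cancel _ (hU t))
  rw [capelli_eq _ _ _ v (scrE_phi ST R φ)]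
  have e2 := capelli_eq _ _ _ (v + 1) (scrE_F ST)
  rw [add_zero] at e2
  rw [e2]
  have a1 : ∀ t : Fin n, v + (((m+1 : ℕ)) : TSer ST.T) - ((t : ℕ) : TSer ST.T) - 1
      = v + (m : TSer ST.T) - ((t : ℕ) : TSer ST.T) := fun t => by push_cast; abel
  have a2 : ∀ t : Fin n, v + 1 + (m : TSer ST.T) - ((t : ℕ) : TSer ST.T) - 1
      = v + (m : TSer ST.T) - ((t : ℕ) : TSer ST.T) := fun t => by abel
  simp only [a1, a2]
  have a3 : ∀ t : Fin n, Ring.inverse ((FA ST).map HahnSeries.C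
      - (v + (m : TSer ST.T) - ((t : ℕ) : TSer ST.T)) • (1 : Mt m n (TSer ST.T))) = s t :=
    fun t => inverse_eq (hs1 t) (hs2 t)
  simp only [a3]
  rw [hs]
  congr 1
  rw [KA, map_sub, map_add, map_natCast, map_natCast]
  abel

lemma rdet_zero {B : Type} [Ring B] (S : Fin n → Mt m n B) (t : Fin n) (h : S t = 0) : rdet S = 0 := by
  refine Finset.sum_eq_zero fun τ _ => ?_
  rw [List.prod_eq_zero, smul_zero]
  rw [List.mem_ofFn]
  exact ⟨t, by rw [h]; rfl⟩
end
end

/-- Theorem 5.5.  With `C_φ` the Capelli Berezinian of `gl(m+1|n)` pushed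
through `φ_R` (equivalently: the Capelli expression formed from the matrix `φ(𝔈)`, regarded
as a function of a Laurent-series argument), one has `C_φ(T+R) = (E − T)·C_{m|n}(T+1)`, and
consequently `C_φ(E+R) = 0`. -/
theorem stmt14 (m n : ℕ) (ST : SuperTensor m n) (R : ST.T)
    (hR : R ∈ Subalgebra.center ℂ ST.T)
    (φ : UEA (Ind (m+1) n) pI →ₐ[ℂ] ST.T) (hφ : IsPhi ST R φ) :
    (capelli (m := m+1) (n := n) (scrE (m+1) n fun i j => φ (gen pI i j))
        (Tv + HahnSeries.C R) =
      (HahnSeries.C (ST.inD (En m n)) - Tv) *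
        capelli (scrE m n fun i j => ST.inU (gen pI i j)) (Tv + 1)) ∧
    capelli (m := m+1) (n := n) (scrE (m+1) n fun i j => φ (gen pI i j))
        (HahnSeries.C (ST.inD (En m n) + R)) = 0 := by
  have hR' : ∀ x, R * x = x * R := fun x => ((Subalgebra.mem_center_iff).1 hR x).symm
  refine ⟨main_v ST R hR' φ hφ Tv T_central fun t => ?_, ?_⟩
  · have := unit_T (NA ST R φ) ((m : ST.T) - ((t : ℕ) : ST.T))
    rw [map_sub, map_natCast, map_natCast, ← add_sub_assoc] at this
    exact this
  · rw [map_add]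
    have hv := C_central (E_central ST)
    by_cases hU : ∀ t : Fin n, IsUnit ((NA ST R φ).map HahnSeries.C
      - (HahnSeries.C (ST.inD (En m n)) + (m : TSer ST.T) - ((t : ℕ) : TSer ST.T)) • (1 : Mt (m+1) n (TSer ST.T)))
    · rw [main_v ST R hR' φ hφ _ hv hU, sub_self, zero_mul]
    · obtain ⟨t, ht⟩ := not_forall.1 hU
      rw [capelli_eq _ _ _ _ (scrE_phi ST R φ), rdet_zero _ t, mul_zero]
      have a1 : HahnSeries.C (ST.inD (En m n)) + (((m+1 : ℕ)) : TSer ST.T) - ((t : ℕ) : TSer ST.T) - 1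
          = HahnSeries.C (ST.inD (En m n)) + (m : TSer ST.T) - ((t : ℕ) : TSer ST.T) := by push_cast; abel
      simp only [a1]
      exact Ring.inverse_non_unit _ ht
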